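/- Let S = k[x_0,…,x_n, y_0,…,y_m] be a bigraded polynomial ring and let V be a complete intersection scheme of points in P^n × P^m defined by I = (f_1,…,f_{n+m}) with deg(f_i) = (d,e) for all i. If μ ∈ Z² does not belong to ⋃_{i ≥ 2} Γ_i, then HF_{S/I}(μ) = χ(μ), where χ(a,b) = Σ_i (−1)^i C(n+m, i) C(n+a−id, n) C(m+b−ie, m). -/

import Mathlib

open MvPolynomial Pointwise

noncomputable section

/-- The bigraded polynomial ring `S = k[x_0,…,x_n,y_0,…,y_m]`. -/
abbrev PolyS (k : Type) [Field k] (n m : ℕ) := MvPolynomial (Fin (n+1) ⊕ Fin (m+1)) k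

/-- The bigrading weights: `deg x_i = (1,0)`, `deg y_j = (0,1)`. -/
def wt (n m : ℕ) : (Fin (n+1) ⊕ Fin (m+1)) → ℤ × ℤ :=
  Sum.elim (fun _ => (1,0)) (fun _ => (0,1))

/-- The bigraded piece of `S` in bidegree `γ`. -/
def grad (k : Type) [Field k] (n m : ℕ) (γ : ℤ × ℤ) : Submodule k (PolyS k n m) :=
  weightedHomogeneousSubmodule k (wt n m) γ

/-- `B₁ = (x_0,…,x_n)`. -/
def Bone (k : Type) [Field k] (n m : ℕ) : Ideal (PolyS k n m) :=
  Ideal.span (Set.range fun i => X (Sum.inl i))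

/-- `B₂ = (y_0,…,y_m)`. -/
def Btwo (k : Type) [Field k] (n m : ℕ) : Ideal (PolyS k n m) :=
  Ideal.span (Set.range fun j => X (Sum.inr j))

/-- `B = B₁ ⬝ B₂`, the irrelevant ideal of `ℙⁿ × ℙᵐ`. -/
def Birr (k : Type) [Field k] (n m : ℕ) : Ideal (PolyS k n m) := Bone k n m * Btwo k n m

/-- The saturation `I : C^∞` of an ideal. -/
def satIdeal {k : Type} [Field k] {n m : ℕ} (I C : Ideal (PolyS k n m)) :
    Ideal (PolyS k n m) :=
  ⨆ t : ℕ, Submodule.colon I (C ^ t)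

/-- The bidegree-`γ` piece of `S ⧸ I`, as a `k`-subspace. -/
def quotPiece (k : Type) [Field k] (n m : ℕ) (I : Ideal (PolyS k n m)) (γ : ℤ × ℤ) :
    Submodule k ((PolyS k n m) ⧸ I) :=
  (grad k n m γ).map (Ideal.Quotient.mkₐ k I).toLinearMap

/-- The bigraded Hilbert function of `S ⧸ I`. -/
def HFq (k : Type) [Field k] (n m : ℕ) (I : Ideal (PolyS k n m)) (γ : ℤ × ℤ) : ℕ :=
  Module.finrank k (quotPiece k n m I γ)

/-- The bigraded Hilbert function of the subscheme of `ℙⁿ × ℙᵐ` defined by `I`, i.e. the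
Hilbert function of `S ⧸ (I : B^∞)`. -/
def HFV (k : Type) [Field k] (n m : ℕ) (I : Ideal (PolyS k n m)) (γ : ℤ × ℤ) : ℕ :=
  HFq k n m (satIdeal I (Birr k n m)) γ

/-- `codim V = r`, encoded as: the cone over `V` (i.e. `Spec` of `S` modulo the saturation
of `I`) has Krull dimension `n + m + 2 - r`. -/
def CodimEq (k : Type) [Field k] (n m : ℕ) (I : Ideal (PolyS k n m)) (r : ℕ) : Prop :=
  ringKrullDim ((PolyS k n m) ⧸ satIdeal I (Birr k n m)) = ((n + m + 2 - r : ℕ) : WithBot ℕ∞)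

/-- The Hilbert function of `S` itself. -/
def HFS (k : Type) [Field k] (n m : ℕ) (γ : ℤ × ℤ) : ℕ :=
  Module.finrank k (grad k n m γ)

/-- Integer binomial coefficient `C(x,t)`, with the Hilbert-function convention that it
vanishes for `x < 0`. -/
def ibin (x : ℤ) (t : ℕ) : ℤ := if x < 0 then 0 else (x.toNat.choose t : ℤ)

/-- `χ(a,b) = Σᵢ (−1)^i C(n+m,i) C(n+a−id,n) C(m+b−ie,m)`. -/
def chiCI (n m d e : ℕ) (γ : ℤ × ℤ) : ℤ :=
  ∑ i ∈ Finset.range (n + m + 1),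
    (-1) ^ i * (Nat.choose (n + m) i : ℤ) *
      ibin ((n : ℤ) + γ.1 - i * d) n * ibin ((m : ℤ) + γ.2 - i * e) m

/-- `v_i = i·(d,e) − (n+1,0)`. -/
def vpt (n d e : ℕ) (i : ℤ) : ℤ × ℤ := (i * d - (n + 1), i * e)

/-- `w_i = i·(d,e) − (0,m+1)`. -/
def wpt (m d e : ℕ) (i : ℤ) : ℤ × ℤ := (i * d, i * e - (m + 1))

/-- `σ = (n+m)·(d,e) − (n+1,m+1)`. -/
def sigmaPt (n m d e : ℕ) : ℤ × ℤ :=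
  ((n + m : ℤ) * d - (n + 1), (n + m : ℤ) * e - (m + 1))

/-- `Γ_i = Supp(H^{n+1}_{B₁}(K_{n+i}(f,S))) ∪ Supp(H^{m+1}_{B₂}(K_{m+i}(f,S)))`, computed
explicitly: for `0 ≤ n+i ≤ n+m` the first support is `v_{n+i} + (−ℕ,ℕ)`, and for
`0 ≤ m+i ≤ n+m` the second support is `w_{m+i} + (ℕ,−ℕ)`; otherwise the Koszul terms
vanish. -/
def GammaSet (n m d e : ℕ) (i : ℤ) : Set (ℤ × ℤ) :=
  {γ | (0 ≤ (n : ℤ) + i ∧ (n : ℤ) + i ≤ (n : ℤ) + m ∧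
          γ.1 ≤ ((n : ℤ) + i) * d - ((n : ℤ) + 1) ∧ ((n : ℤ) + i) * e ≤ γ.2) ∨
       (0 ≤ (m : ℤ) + i ∧ (m : ℤ) + i ≤ (n : ℤ) + m ∧
          ((m : ℤ) + i) * d ≤ γ.1 ∧ γ.2 ≤ ((m : ℤ) + i) * e - ((m : ℤ) + 1))}

/-- `V = Proj(S/I)` is a complete intersection scheme of points in `ℙⁿ × ℙᵐ` defined by
`n+m` forms of bidegree `(d,e)`: `I` is generated by the `f i`, each `f i` is bihomogeneous
of bidegree `(d,e)`, and `V` is zero-dimensional (codimension `n+m`). -/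
def IsCIPoints (k : Type) [Field k] (n m d e : ℕ) (f : Fin (n + m) → PolyS k n m)
    (I : Ideal (PolyS k n m)) : Prop :=
  (∀ i, f i ∈ grad k n m ((d : ℤ), (e : ℤ))) ∧ I = Ideal.span (Set.range f) ∧
    CodimEq k n m I (n + m)

/-! The positive Koszul homology of `f` is killed by a power of each `x_i y_j`: the points being
finitely many, after inverting `x_i y_j` all other variables are integral over `k[x_i, y_j]` modulo
`f`, which makes `f` a regular sequence there. So in the double complex formed by the Koszul complex
and the augmented Čech complex of `P^n × P^m`, taken in degree `μ`, the Koszul direction is exact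
once a product `x_i y_j` is inverted.

The Čech complex is modelled on the localizations at the products of all sets of variables meeting
both groups. It splits along Laurent monomials, and a monomial contributes to its cohomology only if
its set of negative exponents is all of the `x`, all of the `y`, or both. The first two cases
are `H^{n+1}_{B_1}` and `H^{m+1}_{B_2}`; those of the Koszul terms `K_j` which could obstruct the
diagram chase vanish in degree `μ` by the hypothesis on the `Γ_i`. The third lies in cohomological
degree too high to interfere. Hence the degree `μ` part of the Koszul complex of `f` over `S` is
exact in positive degrees, and its Euler characteristic is `χ(μ)`. -/

open Finset

section Exterior

variable {ι : Type*} [LinearOrder ι]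

/-- The sign `(-1)^#{j ∈ T | j < i}` with which `i` is moved past the elements of `T`. -/
def shuffleSign (T : Finset ι) (i : ι) : ℤ := (-1) ^ #{j ∈ T | j < i}

lemma shuffleSign_mul_self (T : Finset ι) (i : ι) : shuffleSign T i * shuffleSign T i = 1 := by
  rw [shuffleSign, ← mul_pow, neg_one_mul, neg_neg, one_pow]

lemma shuffleSign_insert {T : Finset ι} {i j : ι} (hj : j ∉ T) :
    shuffleSign (insert j T) i = (if j < i then -1 else 1) * shuffleSign T i := by
  by_cases hji : j < i
  · have hj' : j ∉ {l ∈ T | l < i} := fun h => hj (mem_filter.mp h).1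
    simp [shuffleSign, filter_insert, hji, card_insert_of_notMem hj', pow_succ']
  · simp [shuffleSign, filter_insert, hji]

lemma shuffleSign_insert_self (T : Finset ι) (i : ι) :
    shuffleSign (insert i T) i = shuffleSign T i := by
  simp [shuffleSign, filter_insert]

lemma shuffleSign_erase_self (T : Finset ι) (i : ι) :
    shuffleSign (T.erase i) i = shuffleSign T i := by
  by_cases hi : i ∈ T
  · rw [← shuffleSign_insert_self, insert_erase hi]
  · rw [erase_eq_of_notMem hi]

lemma shuffleSign_mul_insert {T : Finset ι} {i j : ι} (hij : i ≠ j) (hi : i ∉ T) (hj : j ∉ T) :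
    shuffleSign T i * shuffleSign (insert i T) j
      = -(shuffleSign T j * shuffleSign (insert j T) i) := by
  rw [shuffleSign_insert hi, shuffleSign_insert hj]
  rcases lt_or_gt_of_ne hij with h | h <;> simp [h, h.not_gt, mul_comm]

variable {M : Type*} [AddCommGroup M]

/-- Exterior multiplication by the basis vector `i` on `M`-valued cochains indexed by finite
subsets of `ι`. -/
def wedge (i : ι) : (Finset ι → M) →+ (Finset ι → M) where
  toFun c T := if i ∈ T then shuffleSign T i • c (T.erase i) else 0
  map_zero' := by ext; simp
  map_add' c c' := by ext T; by_cases hi : i ∈ T <;> simp [hi]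

/-- Contraction against the basis vector dual to `i`. -/
def contract (i : ι) : (Finset ι → M) →+ (Finset ι → M) where
  toFun c T := if i ∈ T then 0 else shuffleSign T i • c (insert i T)
  map_zero' := by ext; simp
  map_add' c c' := by ext T; by_cases hi : i ∈ T <;> simp [hi]

lemma wedge_apply (i : ι) (c : Finset ι → M) (T : Finset ι) :
    wedge i c T = if i ∈ T then shuffleSign T i • c (T.erase i) else 0 := rfl

lemma contract_apply (i : ι) (c : Finset ι → M) (T : Finset ι) :
    contract i c T = if i ∈ T then 0 else shuffleSign T i • c (insert i T) := rfl

lemma wedge_insert {i : ι} {T : Finset ι} (hi : i ∉ T) (c : Finset ι → M) :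
    wedge i c (insert i T) = shuffleSign T i • c T := by
  simp [wedge_apply, hi, shuffleSign_insert_self]

lemma contract_of_notMem {i : ι} {T : Finset ι} (hi : i ∉ T) (c : Finset ι → M) :
    contract i c T = shuffleSign T i • c (insert i T) := by
  simp [contract_apply, hi]

lemma wedge_wedge_self (i : ι) (c : Finset ι → M) : wedge i (wedge i c) = 0 := by
  ext T
  simp [wedge_apply]

lemma contract_contract_self (i : ι) (c : Finset ι → M) : contract i (contract i c) = 0 := by
  ext T
  simp [contract_apply]

lemma contract_contract (i j : ι) (c : Finset ι → M) :
    contract i (contract j c) = -contract j (contract i c) := by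
  obtain rfl | hij := eq_or_ne i j
  · simp [contract_contract_self]
  ext T
  by_cases hi : i ∈ T
  · simp [contract_apply, hi]
  by_cases hj : j ∈ T
  · simp [contract_apply, hj]
  simp [contract_apply, hi, hj, hij, hij.symm, smul_smul, insert_comm j i T,
    shuffleSign_mul_insert hij hi hj]

lemma wedge_wedge (i j : ι) (c : Finset ι → M) : wedge i (wedge j c) = -wedge j (wedge i c) := by
  obtain rfl | hij := eq_or_ne i j
  · simp [wedge_wedge_self]
  ext T
  by_cases hi : i ∈ T; swap
  · simp [wedge_apply, hi]
  by_cases hj : j ∈ T; swap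
  · simp [wedge_apply, hj]
  obtain ⟨T, hiT, rfl⟩ : ∃ U, i ∉ U ∧ insert i U = T := ⟨T.erase i, by simp, insert_erase hi⟩
  obtain ⟨T, hjT, rfl⟩ : ∃ U, j ∉ U ∧ insert j U = T :=
    ⟨T.erase j, by simp, insert_erase ((mem_insert.mp hj).resolve_left hij.symm)⟩
  have hi' : i ∉ T := fun h => hiT (mem_insert_of_mem h)
  have hjT' : j ∉ insert i T := by simp [hij.symm, hjT]
  rw [Pi.neg_apply, wedge_insert hiT, wedge_insert hjT, insert_comm, wedge_insert hjT',
    wedge_insert hi', smul_smul, smul_smul, ← neg_smul, mul_comm,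
    shuffleSign_mul_insert hij.symm hjT hi', mul_comm]

lemma wedge_contract (i j : ι) (c : Finset ι → M) :
    wedge i (contract j c) + contract j (wedge i c) = if i = j then c else 0 := by
  ext T
  obtain rfl | hij := eq_or_ne i j
  · by_cases hi : i ∈ T <;>
      simp [wedge_apply, contract_apply, hi, smul_smul, shuffleSign_mul_self,
        shuffleSign_insert_self, shuffleSign_erase_self]
  by_cases hi : i ∈ T; swap
  · simp [wedge_apply, contract_apply, hi, hij]
  by_cases hj : j ∈ T
  · simp [wedge_apply, contract_apply, hj, hij, hij.symm]
  obtain ⟨T, hiT, rfl⟩ : ∃ U, i ∉ U ∧ insert i U = T := ⟨T.erase i, by simp, insert_erase hi⟩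
  have hjT : j ∉ T := fun h => hj (mem_insert_of_mem h)
  have hiT' : i ∉ insert j T := by simp [hij, hiT]
  rw [Pi.add_apply, wedge_insert hiT, contract_of_notMem hj, contract_of_notMem hjT,
    insert_comm, wedge_insert hiT', smul_smul, smul_smul, ← add_smul,
    shuffleSign_insert hiT, shuffleSign_insert hjT]
  rcases lt_or_gt_of_ne hij with h | h <;> simp [h, h.not_gt, hij, mul_comm]

lemma contract_smul {R : Type*} [CommRing R] [Module R M] (i : ι) (r : R) (c : Finset ι → M) :
    contract i (r • c) = r • contract i c := by
  ext U
  by_cases hi : i ∈ U <;> simp [contract_apply, hi, smul_comm _ r]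

lemma wedge_smul {R : Type*} [CommRing R] [Module R M] (i : ι) (r : R) (c : Finset ι → M) :
    wedge i (r • c) = r • wedge i c := by
  ext U
  by_cases hi : i ∈ U <;> simp [wedge_apply, hi, smul_comm _ r]

end Exterior

section Differentials

variable {ι : Type*} [Fintype ι]

lemma sum_sum_eq_zero_of_antisymm {A : Type*} [AddCommGroup A] {F : ι → ι → A}
    (hdiag : ∀ i, F i i = 0) (hanti : ∀ i j, F i j = -F j i) : ∑ i, ∑ j, F i j = 0 := by
  rw [← Fintype.sum_prod_type']
  refine sum_involution (fun p _ => p.swap) (fun p _ => ?_) (fun p _ hp h => hp ?_)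
    (fun _ _ => mem_univ _) fun _ _ => Prod.swap_swap _
  · rw [hanti, Prod.fst_swap, Prod.snd_swap, neg_add_cancel]
  · rw [← (Prod.ext_iff.mp h).1, Prod.fst_swap, hdiag]

variable [LinearOrder ι] {M M' : Type*} [AddCommGroup M] [AddCommGroup M']

/-- The augmented Čech (full simplex) differential on `M`-valued cochains, in which the empty set
has degree `-1`. -/
def cech : (Finset ι → M) →+ (Finset ι → M) := ∑ i, wedge i

lemma cech_eq_sum (c : Finset ι → M) : cech c = ∑ i, wedge i c :=
  AddMonoidHom.finsetSum_apply _ _ _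

lemma cech_apply (c : Finset ι → M) (T : Finset ι) :
    cech c T = ∑ i ∈ T, shuffleSign T i • c (T.erase i) := by
  simp [cech_eq_sum, wedge_apply, sum_ite_mem]

lemma cech_congr {c c' : Finset ι → M} {T : Finset ι}
    (h : ∀ i ∈ T, c (T.erase i) = c' (T.erase i)) : cech c T = cech c' T := by
  rw [cech_apply, cech_apply]
  exact sum_congr rfl fun i hi => by rw [h i hi]

lemma cech_cech (c : Finset ι → M) : cech (cech c) = 0 := by
  simp only [cech_eq_sum, map_sum]
  exact sum_sum_eq_zero_of_antisymm (fun i => wedge_wedge_self i c) fun i j => wedge_wedge j i c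

lemma cech_contract_add (i : ι) (c : Finset ι → M) :
    cech (contract i c) + contract i (cech c) = c := by
  simp only [cech_eq_sum, map_sum, ← sum_add_distrib, wedge_contract]
  simp

lemma cech_map (φ : M →+ M') (c : Finset ι → M) :
    cech (fun T => φ (c T)) = fun T => φ (cech c T) := by
  ext T
  simp only [cech_apply, map_sum, map_zsmul]

variable {R R' : Type*} [CommRing R] [CommRing R'] [Module R M] [Module R' M']

/-- The Koszul differential of the sequence `f` with coefficients in `M`. -/
def koszul (f : ι → R) : (Finset ι → M) →ₗ[R] (Finset ι → M) where
  toFun c := ∑ i, f i • contract i c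
  map_add' c c' := by simp only [map_add, smul_add, sum_add_distrib]
  map_smul' r c := by
    simp only [contract_smul, smul_sum, smul_comm _ r, RingHom.id_apply]

lemma koszul_eq_sum (f : ι → R) (c : Finset ι → M) :
    koszul f c = ∑ i, f i • contract i c := rfl

lemma koszul_apply (f : ι → R) (c : Finset ι → M) (U : Finset ι) :
    koszul f c U = ∑ i ∈ Uᶜ, shuffleSign U i • f i • c (insert i U) := by
  have hterm (i : ι) : (f i • contract i c) U
      = if i ∈ Uᶜ then shuffleSign U i • f i • c (insert i U) else 0 := by
    by_cases hi : i ∈ U <;> simp [contract_apply, hi, smul_comm _ (f i)]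
  simp only [koszul_eq_sum, Finset.sum_apply, hterm, sum_ite_mem, univ_inter]

lemma koszul_koszul (f : ι → R) (c : Finset ι → M) : koszul f (koszul f c) = 0 := by
  simp only [koszul_eq_sum, map_sum, contract_smul, smul_smul]
  refine sum_sum_eq_zero_of_antisymm (fun i => ?_) fun i j => ?_
  · rw [contract_contract_self, smul_zero]
  · rw [contract_contract, smul_neg, mul_comm]

lemma wedge_koszul_add (f : ι → R) (i : ι) (c : Finset ι → M) :
    wedge i (koszul f c) + koszul f (wedge i c) = f i • c := by
  simp only [koszul_eq_sum, map_sum, wedge_smul, ← sum_add_distrib, ← smul_add, wedge_contract]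
  simp

lemma koszul_map {f : ι → R} {f' : ι → R'} (φ : M →+ M')
    (hφ : ∀ i x, φ (f i • x) = f' i • φ x) (c : Finset ι → M) :
    koszul f' (fun U => φ (c U)) = fun U => φ (koszul f c U) := by
  ext U
  simp only [koszul_apply, map_sum, map_zsmul, hφ]

end Differentials

section Torsion

variable {ι R : Type*} [LinearOrder ι] [CommRing R]

lemma wedge_eq_zero_of_card_lt {M : Type*} [AddCommGroup M] {z : Finset ι → M} {q : ℕ}
    (hz : ∀ U, #U < q → z U = 0) (i : ι) {U : Finset ι} (hU : #U < q + 1) : wedge i z U = 0 := by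
  by_cases hi : i ∈ U
  · rw [wedge_apply, if_pos hi, hz _ (by have := card_erase_add_one hi; lia), smul_zero]
  · rw [wedge_apply, if_neg hi]

variable [Fintype ι]

lemma exists_koszul_eq_smul {M : Type*} [AddCommGroup M] [Module R M] {f : ι → R} {a : R}
    (ha : a ∈ Ideal.span (Set.range f)) {q : ℕ} {z : Finset ι → M} (hz : ∀ U, #U < q → z U = 0)
    (hfz : koszul f z = 0) :
    ∃ w : Finset ι → M, (∀ U, #U < q + 1 → w U = 0) ∧ koszul f w = a • z := by
  obtain ⟨b, rfl⟩ := Ideal.mem_span_range_iff_exists_fun.mp ha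
  refine ⟨∑ i, b i • wedge i z, fun U hU => ?_, ?_⟩
  · simp [wedge_eq_zero_of_card_lt hz _ hU]
  · have homotopy (i : ι) : koszul f (wedge i z) = f i • z := by
      simpa [hfz] using wedge_koszul_add f i z
    simp only [map_sum, map_smul, homotopy, smul_smul, sum_smul]

open RingTheory.Sequence in
theorem exists_koszul_eq_pow_smul {f : ι → R} {g : R} {gs : List R} {M : Type*} [AddCommGroup M]
    [Module R M] (hreg : IsWeaklyRegular M gs)
    (hgs : ∀ G ∈ gs, ∃ N : ℕ, g ^ N * G ∈ Ideal.span (Set.range f)) {q : ℕ}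
    (hq : Fintype.card ι < q + gs.length) {z : Finset ι → M} (hz : ∀ U, #U < q → z U = 0)
    (hfz : koszul f z = 0) : ∃ (N : ℕ) (v : Finset ι → M), koszul f v = g ^ N • z := by
  induction gs generalizing M q with
  | nil =>
    have hz0 : z = 0 := funext fun U => hz U ((card_le_univ U).trans_lt (by simpa using hq))
    exact ⟨0, 0, by simp [hz0]⟩
  | cons G gs ih =>
    obtain ⟨hG, hreg'⟩ := (isWeaklyRegular_cons_iff M G gs).mp hreg
    obtain ⟨N, hN⟩ := hgs G List.mem_cons_self
    obtain ⟨w, hw, hfw⟩ := exists_koszul_eq_smul hN hz hfz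
    let π : M →ₗ[R] QuotSMulTop G M := Submodule.mkQ _
    have hπ (x : M) : π x = 0 ↔ ∃ y, G • y = x := by
      simp [π, Submodule.mem_smul_pointwise_iff_exists]
    have koszul_π (c : Finset ι → M) : koszul f (fun U => π (c U)) = fun U => π (koszul f c U) :=
      koszul_map π.toAddMonoidHom (fun i x => π.map_smul (f i) x) c
    obtain ⟨N', u, hu⟩ := ih hreg' (fun G' h => hgs G' (List.mem_cons_of_mem _ h)) (q := q + 1)
      (by simp at hq; lia) (z := fun U => π (w U)) (fun U hU => by simp [hw U hU]) <| by
        rw [koszul_π, hfw]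
        exact funext fun U => (hπ _).mpr ⟨g ^ N • z U, by simp [smul_smul, mul_comm]⟩
    obtain ⟨u', rfl⟩ : ∃ u' : Finset ι → M, (fun U => π (u' U)) = u :=
      ⟨fun U => (u U).out, funext fun U => Quotient.out_eq _⟩
    -- `g ^ N' • w - koszul f u'` vanishes modulo `G`, and dividing it by `G` gives the preimage.
    have hdiv (U : Finset ι) : ∃ y, G • y = (g ^ N' • w - koszul f u') U := by
      rw [← hπ, Pi.sub_apply, map_sub, sub_eq_zero]
      simpa [koszul_π] using (congrFun hu U).symm
    choose v hv using hdiv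
    refine ⟨N' + N, v, funext fun U => hG ?_⟩
    have hGv : G • koszul f v = G • g ^ (N' + N) • z := by
      rw [← map_smul, show G • v = _ from funext hv, map_sub, map_smul, koszul_koszul, sub_zero,
        hfw, smul_smul, smul_smul, pow_add]
      ring_nf
    exact congrFun hGv U

end Torsion

section Cochains

variable {ι k M : Type*} [CommRing k] [AddCommGroup M] [Module k M]

/-- The cochains concentrated in degree `q` whose value at `U` lies in `P U`. -/
def cochains (P : Finset ι → Submodule k M) (q : ℕ) : Submodule k (Finset ι → M) where
  carrier := {c | (∀ U, c U ∈ P U) ∧ ∀ U, #U ≠ q → c U = 0}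
  zero_mem' := ⟨fun U => (P U).zero_mem, fun _ _ => rfl⟩
  add_mem' hc hc' := ⟨fun U => (P U).add_mem (hc.1 U) (hc'.1 U),
    fun U hU => by simp [hc.2 U hU, hc'.2 U hU]⟩
  smul_mem' a c hc := ⟨fun U => (P U).smul_mem a (hc.1 U), fun U hU => by simp [hc.2 U hU]⟩

variable {P : Finset ι → Submodule k M} {q : ℕ} {c : Finset ι → M}

variable [Fintype ι]

lemma cochains_eq_bot (hq : Fintype.card ι < q) : cochains P q = ⊥ := by
  refine eq_bot_iff.mpr fun c hc => funext fun U => hc.2 U ?_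
  have := card_le_univ U
  lia

variable [LinearOrder ι] {R : Type*} [CommRing R] [Module R M] {f : ι → R}

lemma koszul_mem_cochains (hP : ∀ U, ∀ i ∉ U, ∀ x ∈ P (insert i U), f i • x ∈ P U)
    (hc : c ∈ cochains P (q + 1)) : koszul f c ∈ cochains P q := by
  refine ⟨fun U => ?_, fun U hU => ?_⟩ <;> rw [koszul_apply]
  · exact sum_mem fun i hi => zsmul_mem (hP U i (mem_compl.mp hi) _ (hc.1 _)) _
  · refine sum_eq_zero fun i hi => ?_
    rw [hc.2 _ (by rw [card_insert_of_notMem (mem_compl.mp hi)]; lia), smul_zero, smul_zero]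

lemma exists_mem_cochains_koszul_eq (π : Finset ι → M →+ M) (hπP : ∀ U x, π U x ∈ P U)
    (hπ : ∀ U, ∀ x ∈ P U, π U x = x)
    (hcomm : ∀ U, ∀ i ∉ U, ∀ x, f i • π (insert i U) x = π U (f i • x))
    (hc : c ∈ cochains P q) {v : Finset ι → M} (hv : koszul f v = c) :
    ∃ w ∈ cochains P (q + 1), koszul f w = c := by
  refine ⟨fun U => if #U = q + 1 then π U (v U) else 0, ⟨fun U => ?_, fun U hU => if_neg hU⟩,
    funext fun U => ?_⟩
  · dsimp only
    split_ifs
    exacts [hπP U _, zero_mem _]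
  by_cases hU : #U = q
  · calc koszul f _ U
        = ∑ i ∈ Uᶜ, shuffleSign U i • π U (f i • v (insert i U)) := by
          rw [koszul_apply]
          refine sum_congr rfl fun i hi => ?_
          have hi' := mem_compl.mp hi
          rw [if_pos (by rw [card_insert_of_notMem hi', hU]), hcomm U i hi']
      _ = π U (c U) := by simp only [← hv, koszul_apply, map_sum, map_zsmul]
      _ = c U := hπ U _ (hc.1 U)
  · rw [hc.2 U hU, koszul_apply]
    refine sum_eq_zero fun i hi => ?_
    rw [if_neg (by rw [card_insert_of_notMem (mem_compl.mp hi)]; lia), smul_zero, smul_zero]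

end Cochains

section MonicIn

open RingTheory.Sequence

variable {k σ : Type*} [CommRing k]

/-- `G` is a monic polynomial in the variable `X l` whose coefficients involve only the variables
in `s`. -/
def MonicIn (s : Set σ) (l : σ) (G : MvPolynomial σ k) : Prop :=
  ∃ P : Polynomial (MvPolynomial σ k),
    P.Monic ∧ (∀ t, P.coeff t ∈ supported k s) ∧ P.eval (X l) = G

lemma MonicIn.mono {s t : Set σ} {l : σ} {G : MvPolynomial σ k} (hG : MonicIn s l G)
    (hst : s ⊆ t) : MonicIn t l G := by
  obtain ⟨P, hP, hs, hPG⟩ := hG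
  exact ⟨P, hP, fun i => supported_mono hst (hs i), hPG⟩

lemma MonicIn.mem_supported {s : Set σ} {l : σ} {G : MvPolynomial σ k} (hG : MonicIn s l G) :
    G ∈ supported k (insert l s) := by
  obtain ⟨P, -, hs, rfl⟩ := hG
  rw [Polynomial.eval_eq_sum_range]
  exact sum_mem fun t _ => mul_mem (supported_mono (Set.subset_insert l s) (hs t))
    (pow_mem (Algebra.subset_adjoin (Set.mem_image_of_mem X (Set.mem_insert l s))) t)

/-- `MvPolynomial σ k` modulo an ideal `J`, with `X l` turned into the variable of a univariate
polynomial ring. -/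
def univariateMod (J : Ideal (MvPolynomial σ k)) (l : σ) :
    MvPolynomial σ k →ₐ[k] Polynomial (MvPolynomial σ k ⧸ J) :=
  open Classical in
  aeval fun i => if i = l then Polynomial.X else Polynomial.C (Ideal.Quotient.mk J (X i))

variable {J : Ideal (MvPolynomial σ k)} {l : σ}

lemma univariateMod_X_self : univariateMod J l (X l) = Polynomial.X := by
  simp [univariateMod]

lemma univariateMod_of_mem_supported {p : MvPolynomial σ k} (hp : p ∈ supported k {l}ᶜ) :
    univariateMod J l p = Polynomial.C (Ideal.Quotient.mk J p) := by
  let ψ : MvPolynomial σ k →ₐ[k] Polynomial (MvPolynomial σ k ⧸ J) :=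
    Polynomial.CAlgHom.comp (Ideal.Quotient.mkₐ k J)
  refine AlgHom.adjoin_le_equalizer (univariateMod J l) ψ ?_ hp
  rintro _ ⟨i, hi, rfl⟩
  simp [univariateMod, ψ, show i ≠ l from hi]

lemma eval_univariateMod (p : MvPolynomial σ k) :
    (univariateMod J l p).eval (Ideal.Quotient.mk J (X l)) = Ideal.Quotient.mk J p := by
  let χ : MvPolynomial σ k →ₐ[k] MvPolynomial σ k ⧸ J :=
    ((Polynomial.aeval (R := MvPolynomial σ k ⧸ J)
      (Ideal.Quotient.mk J (X l))).restrictScalars k).comp (univariateMod J l)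
  have hχ : χ = Ideal.Quotient.mkₐ k J := by
    ext i
    by_cases hi : i = l <;> simp [χ, univariateMod, hi]
  exact DFunLike.congr_fun hχ p

lemma MonicIn.monic_univariateMod {G : MvPolynomial σ k} (hG : MonicIn {l}ᶜ l G) :
    (univariateMod J l G).Monic := by
  obtain ⟨P, hP, hs, rfl⟩ := hG
  have hmap : univariateMod J l (P.eval (X l)) = P.map (Ideal.Quotient.mk J) := by
    rw [Polynomial.eval_eq_sum_range, (P.map _).as_sum_range_C_mul_X_pow' (n := P.natDegree + 1)
      (Polynomial.natDegree_map_le.trans_lt (Nat.lt_succ_self _))]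
    simp only [map_sum, map_mul, map_pow, univariateMod_X_self,
      univariateMod_of_mem_supported (hs _), Polynomial.coeff_map]
  exact hmap ▸ hP.map _

lemma span_le_ker_univariateMod {S : Set (MvPolynomial σ k)}
    (hS : ∀ p ∈ S, p ∈ supported k {l}ᶜ) (hJ : J = Ideal.span S) :
    J ≤ RingHom.ker (univariateMod J l) := by
  rw [hJ, Ideal.span_le, ← hJ]
  intro p hp
  rw [SetLike.mem_coe, RingHom.mem_ker, univariateMod_of_mem_supported (hS p hp),
    Ideal.Quotient.eq_zero_iff_mem.mpr (hJ ▸ Ideal.subset_span hp), Polynomial.C_0]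

lemma MonicIn.mem_of_mul_mem (hJ : J ≤ RingHom.ker (univariateMod J l)) {G u : MvPolynomial σ k}
    (hG : MonicIn {l}ᶜ l G) (hu : G * u ∈ J) : u ∈ J := by
  have hu0 : univariateMod J l u = 0 := by
    have h := RingHom.mem_ker.mp (hJ hu)
    rwa [map_mul, hG.monic_univariateMod.mul_right_eq_zero_iff] at h
  rw [← Ideal.Quotient.eq_zero_iff_mem, ← eval_univariateMod, hu0, Polynomial.eval_zero]

theorem isWeaklyRegular_of_monicIn {s : Set σ} {ls : List σ} (hls : ls.Nodup)
    (hs : ∀ l ∈ ls, l ∉ s) {G : σ → MvPolynomial σ k} (hG : ∀ l ∈ ls, MonicIn s l (G l)) :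
    IsWeaklyRegular (MvPolynomial σ k) (ls.map G) := by
  rw [isWeaklyRegular_iff]
  intro i hi
  have hi' : i < ls.length := by simpa using hi
  rw [isSMulRegular_iff_right_eq_zero_of_smul]
  intro x hx
  obtain ⟨u, rfl⟩ := Submodule.mkQ_surjective _ x
  rw [← map_smul] at hx
  rw [Submodule.mkQ_apply, Submodule.Quotient.mk_eq_zero, Ideal.smul_top_eq_map,
    Algebra.algebraMap_self, Ideal.map_id] at hx ⊢
  have hl : ls[i] ∉ s := hs _ (List.getElem_mem _)
  refine ((hG ls[i] (List.getElem_mem _)).mono (Set.subset_compl_singleton_iff.mpr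
    hl)).mem_of_mul_mem (span_le_ker_univariateMod ?_ rfl) (by simpa using hx)
  intro p hp
  rw [← List.map_take, Set.mem_ofPred_eq, List.mem_map] at hp
  obtain ⟨l', hl', rfl⟩ := hp
  refine supported_mono (Set.subset_compl_singleton_iff.mpr ?_)
    (hG l' (List.mem_of_mem_take hl')).mem_supported
  rintro (h | h)
  · obtain ⟨j, hj, hj'⟩ := List.mem_iff_getElem.mp hl'
    rw [List.length_take] at hj
    rw [List.getElem_take, ← h, hls.getElem_inj_iff] at hj'
    lia
  · exact hl h

end MonicIn

section KrullDimension

lemma natCast_le_ringKrullDim_of_isIntegral {B C : Type*} [CommRing B] [CommRing C] [IsDomain C]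
    [Algebra B C] [Algebra.IsIntegral B C] (hinj : Function.Injective (algebraMap B C)) {N : ℕ}
    (hB : (N : WithBot ℕ∞) ≤ ringKrullDim B) : (N : WithBot ℕ∞) ≤ ringKrullDim C := by
  obtain ⟨l, hl⟩ := Order.le_krullDim_iff.mp hB
  have := (faithfulSMul_iff_algebraMap_injective B C).mpr hinj
  obtain ⟨Q, -, hQ, hcomap⟩ := Ideal.exists_ideal_over_prime_of_isIntegral
    (S := C) (RelSeries.head l).asIdeal ⊥ (by
      rw [← RingHom.ker_eq_comap_bot, (RingHom.injective_iff_ker_eq_bot _).mp hinj]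
      exact bot_le)
  have : Q.LiesOver (RelSeries.head l).asIdeal := ⟨hcomap.symm⟩
  obtain ⟨L, hL, -⟩ := Ideal.exists_ltSeries_of_hasGoingUp l Q
  exact Order.le_krullDim_iff.mpr ⟨L, hL.trans hl⟩

variable {k A : Type*} [Field k] [CommRing A] [Algebra k A] [Algebra.FiniteType k A]
  {N : ℕ} {x : Fin N → A}

lemma natCast_le_ringKrullDim_of_algebraicIndependent_of_isDomain [IsDomain A]
    (hx : AlgebraicIndependent k x) : (N : WithBot ℕ∞) ≤ ringKrullDim A := by
  obtain ⟨s, g, hg, hgint⟩ := exists_integral_inj_algHom_of_fg k A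
  algebraize [g.toRingHom]
  have : Algebra.IsIntegral (MvPolynomial (Fin s) k) A := ⟨hgint⟩
  have : IsScalarTower k (MvPolynomial (Fin s) k) A :=
    IsScalarTower.of_algebraMap_eq fun r => (g.commutes r).symm
  have : FaithfulSMul (MvPolynomial (Fin s) k) A :=
    (faithfulSMul_iff_algebraMap_injective _ _).mpr hg
  have htrdeg : Algebra.trdeg k A = s := by
    have hadd := lift_trdeg_add_eq k (MvPolynomial (Fin s) k) A
    rw [MvPolynomial.trdeg_of_isDomain, trdeg_eq_zero] at hadd
    simpa using hadd.symm
  have hNs : N ≤ s := by simpa [htrdeg] using hx.lift_cardinalMk_le_trdeg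
  refine natCast_le_ringKrullDim_of_isIntegral (B := MvPolynomial (Fin s) k) hg ?_
  rw [MvPolynomial.ringKrullDim_of_isNoetherianRing, ringKrullDim_eq_zero_of_field]
  simpa using hNs

theorem natCast_le_ringKrullDim_of_algebraicIndependent
    (hx : AlgebraicIndependent k x) :
    (N : WithBot ℕ∞) ≤ ringKrullDim A := by
  obtain ⟨P, hP, hcomap⟩ := Ideal.exists_comap_eq_of_mem_minimalPrimes_of_injective
    (f := (aeval x : MvPolynomial (Fin N) k →ₐ[k] A).toRingHom)
    (algebraicIndependent_iff_injective_aeval.mp hx) ⊥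
    (by simp [IsDomain.minimalPrimes_eq_singleton_bot])
  have hxP : AlgebraicIndependent k (fun i => Ideal.Quotient.mk P (x i)) := by
    refine algebraicIndependent_iff.mpr fun p hp => ?_
    have haeval : (aeval fun i => Ideal.Quotient.mk P (x i)) p
        = Ideal.Quotient.mk P (aeval x p) := by
      rw [← Ideal.Quotient.mkₐ_eq_mk k, ← AlgHom.comp_apply]
      congr 1
      ext i
      simp
    rw [haeval, Ideal.Quotient.eq_zero_iff_mem] at hp
    have hmem : p ∈ Ideal.comap (aeval x : MvPolynomial (Fin N) k →ₐ[k] A).toRingHom P := hp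
    rwa [hcomap] at hmem
  exact (natCast_le_ringKrullDim_of_algebraicIndependent_of_isDomain hxP).trans
    (ringKrullDim_quotient_le P)

end KrullDimension

section Dehomogenization

variable {k σ : Type*} [Field k] {u l v : σ} {a b : ℕ} {H : MvPolynomial σ k}

/-- The homogenization sending `X ^ t` to `X u ^ (a - t) * X l ^ t * X v ^ b`; the subtraction is
truncated, so it is only meaningful in degrees `≤ a`. -/
def homogenization (u l v : σ) (a b : ℕ) : Polynomial k →ₗ[k] MvPolynomial σ k :=
  (Polynomial.basisMonomials k).constr k fun t => X u ^ (a - t) * X l ^ t * X v ^ b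

lemma homogenization_monomial (t : ℕ) (c : k) :
    homogenization u l v a b (Polynomial.monomial t c)
      = C c * (X u ^ (a - t) * X l ^ t * X v ^ b) := by
  have ht := (Polynomial.basisMonomials k).constr_basis k
    (fun t => (X u ^ (a - t) * X l ^ t * X v ^ b : MvPolynomial σ k)) t
  rw [Polynomial.coe_basisMonomials] at ht
  rw [← mul_one c, ← smul_eq_mul, ← Polynomial.smul_monomial, map_smul, homogenization, ht,
    smul_eq_mul, mul_one, smul_eq_C_mul]

lemma homogenization_eq_eval_scaleRoots {h : Polynomial k} (hh : h.natDegree ≤ a) :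
    homogenization u l v a b h = X u ^ (a - h.natDegree) * X v ^ b *
      ((h.map C).scaleRoots (X u)).eval (X l) := by
  have hdeg : (h.map (C : k →+* MvPolynomial σ k)).natDegree = h.natDegree :=
    Polynomial.natDegree_map_eq_of_injective (C_injective σ k) h
  conv_lhs => rw [h.as_sum_range, map_sum]
  rw [Polynomial.eval_eq_sum_range, Polynomial.natDegree_scaleRoots, hdeg, mul_sum]
  refine sum_congr rfl fun t ht => ?_
  have hta : a - t = a - h.natDegree + (h.natDegree - t) := by
    have := mem_range.mp ht
    lia
  rw [homogenization_monomial, Polynomial.coeff_scaleRoots, Polynomial.coeff_map, hdeg, hta,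
    pow_add]
  ring

lemma eq_single_add_single_add_single (hul : u ≠ l) (hlv : l ≠ v) (huv : u ≠ v) {e : σ →₀ ℕ}
    (he : ∀ i, e i ≠ 0 → i = u ∨ i = l ∨ i = v) :
    e = Finsupp.single u (e u) + Finsupp.single l (e l) + Finsupp.single v (e v) := by
  classical
  ext i
  by_cases hi : e i = 0
  · simp only [Finsupp.add_apply, Finsupp.single_apply]
    split_ifs <;> simp_all
  · rcases he i hi with rfl | rfl | rfl <;> simp [*, Ne.symm]

lemma exists_eq_homogenization
    (hH : ∀ e ∈ H.support, e l ≤ a ∧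
      e = Finsupp.single u (a - e l) + Finsupp.single l (e l) + Finsupp.single v b) :
    ∃ h : Polynomial k, h.natDegree ≤ a ∧ homogenization u l v a b h = H := by
  refine ⟨∑ e ∈ H.support, Polynomial.monomial (e l) (coeff e H), ?_, ?_⟩
  · exact Polynomial.natDegree_sum_le_of_forall_le _ _ fun e he =>
      (Polynomial.natDegree_monomial_le _).trans (hH e he).1
  · conv_rhs => rw [H.as_sum]
    rw [map_sum]
    refine sum_congr rfl fun e he => ?_
    rw [homogenization_monomial, X_pow_eq_monomial, X_pow_eq_monomial, X_pow_eq_monomial,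
      monomial_mul, monomial_mul, C_mul_monomial, mul_one, mul_one, mul_one]
    exact congrArg (fun e' => monomial e' (coeff e H)) (hH e he).2.symm

lemma exists_monicIn_dvd_of_homogenization {h : Polynomial k} (h0 : h ≠ 0) (hh : h.natDegree ≤ a) :
    ∃ G, MonicIn {u} l G ∧ ∃ N, homogenization u l v a b h ∣ (X u * X v) ^ N * G := by
  let h' := (h * Polynomial.C h.leadingCoeff⁻¹)
  have hmonic : h'.Monic := Polynomial.monic_mul_leadingCoeff_inv h0
  have hdeg : h'.natDegree ≤ a := by rwa [Polynomial.natDegree_mul_leadingCoeff_inv h h0]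
  refine ⟨((h'.map C).scaleRoots (X u)).eval (X l), ⟨_, ?_, fun t => ?_, rfl⟩,
    (a - h'.natDegree) + b, ?_⟩
  · exact (Polynomial.monic_scaleRoots_iff _).mpr (hmonic.map C)
  · rw [Polynomial.coeff_scaleRoots, Polynomial.coeff_map]
    exact mul_mem ((supported k {u}).algebraMap_mem _)
      (pow_mem (Algebra.subset_adjoin (Set.mem_image_of_mem X (Set.mem_singleton u))) _)
  · have hh' : homogenization u l v a b h' = C h.leadingCoeff⁻¹ * homogenization u l v a b h := by
      rw [← smul_eq_C_mul, ← map_smul, Polynomial.smul_eq_C_mul, mul_comm]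
    refine (Dvd.intro_left _ hh'.symm).trans ?_
    rw [homogenization_eq_eval_scaleRoots hdeg]
    exact ⟨X u ^ b * X v ^ (a - h'.natDegree), by ring⟩

/-- A nonzero form in the variables `u`, `l`, `v`, with `u` and `l` of the same degree and
independent of that of `v`, becomes monic in `l` once powers of `u` and `v` are inverted. -/
lemma exists_monicIn_dvd_of_isWeightedHomogeneous {Γ : Type*} [AddCommMonoid Γ] {w : σ → Γ} {γ : Γ}
    (hul : u ≠ l) (hlv : l ≠ v) (huv : u ≠ v) (hw : w l = w u)
    (hinj : Function.Injective fun p : ℕ × ℕ => p.1 • w u + p.2 • w v)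
    (h0 : H ≠ 0) (hH : IsWeightedHomogeneous w H γ) (hsupp : H ∈ supported k {u, l, v}) :
    ∃ G, MonicIn {u} l G ∧ ∃ N, H ∣ (X u * X v) ^ N * G := by
  have hvars {e : σ →₀ ℕ} (he : e ∈ H.support) :
      e = Finsupp.single u (e u) + Finsupp.single l (e l) + Finsupp.single v (e v) :=
    eq_single_add_single_add_single hul hlv huv fun i hi =>
      mem_supported.mp hsupp ((mem_vars_iff_mem_support i).mpr ⟨e, he, by simpa using hi⟩)
  have hdegree {e : σ →₀ ℕ} (he : e ∈ H.support) : (e u + e l) • w u + e v • w v = γ := by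
    have h := hH (mem_support_iff.mp he)
    rw [hvars he] at h
    simp only [map_add, Finsupp.weight_single, hw] at h
    rw [← h, add_smul]
  obtain ⟨e₀, he₀⟩ := support_nonempty.mpr h0
  obtain ⟨h, hh, rfl⟩ := exists_eq_homogenization (u := u) (l := l) (v := v) (a := e₀ u + e₀ l)
    (b := e₀ v) (H := H) fun e he => by
      have heq := Prod.ext_iff.mp (@hinj (e u + e l, e v) (e₀ u + e₀ l, e₀ v)
        ((hdegree he).trans (hdegree he₀).symm))
      dsimp only at heq
      rw [← heq.1, ← heq.2, Nat.add_sub_cancel]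
      exact ⟨Nat.le_add_left _ _, hvars he⟩
  exact exists_monicIn_dvd_of_homogenization (fun hzero => h0 (by rw [hzero, map_zero])) hh

end Dehomogenization

section Dependence

variable {k σ : Type*} [Field k]

lemma exists_isWeightedHomogeneous_mem {Γ : Type*} [AddCommMonoid Γ] {w : σ → Γ}
    {I : Ideal (MvPolynomial σ k)}
    (hI : ∀ F ∈ I, ∀ γ, weightedHomogeneousComponent w γ F ∈ I) {s : Set σ}
    {F : MvPolynomial σ k} (hF : F ∈ I) (hF0 : F ≠ 0) (hs : F ∈ supported k s) :
    ∃ H ∈ I, H ≠ 0 ∧ H ∈ supported k s ∧ ∃ γ, IsWeightedHomogeneous w H γ := by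
  classical
  obtain ⟨e, he⟩ := support_nonempty.mpr hF0
  refine ⟨weightedHomogeneousComponent w (Finsupp.weight w e) F, hI F hF _, fun h => ?_, ?_,
    _, weightedHomogeneousComponent_isWeightedHomogeneous _ _⟩
  · have hcoeff := coeff_weightedHomogeneousComponent (w := w) (Finsupp.weight w e) F e
    rw [h, if_pos rfl, coeff_zero] at hcoeff
    exact mem_support_iff.mp he hcoeff.symm
  · refine mem_supported.mpr fun i hi => mem_supported.mp hs ?_
    obtain ⟨e', he', hi'⟩ := (mem_vars_iff_mem_support i).mp hi
    rw [support_weightedHomogeneousComponent] at he'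
    exact (mem_vars_iff_mem_support i).mpr ⟨e', (mem_filter.mp he').1, hi'⟩

lemma weightedHomogeneousComponent_mem_span_range {Γ ι : Type*} [AddCommMonoid Γ]
    {w : σ → Γ} {f : ι → MvPolynomial σ k} {δ : ι → Γ}
    (hf : ∀ i, IsWeightedHomogeneous w (f i) (δ i)) {F : MvPolynomial σ k}
    (hF : F ∈ Ideal.span (Set.range f)) (γ : Γ) :
    weightedHomogeneousComponent w γ F ∈ Ideal.span (Set.range f) := by
  classical
  let _ := weightedGradedAlgebra k w
  refine weightedHomogeneousComponent_mem_of_mem _ _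
    (Ideal.homogeneous_span (weightedHomogeneousSubmodule k w) (Set.range f) ?_) hF γ
  rintro _ ⟨i, rfl⟩
  exact ⟨δ i, hf i⟩

lemma exists_rename_mem_of_ringKrullDim_lt [Finite σ] {J : Ideal (MvPolynomial σ k)} {N : ℕ}
    (hJ : ringKrullDim (MvPolynomial σ k ⧸ J) < N) (v : Fin N → σ) :
    ∃ p : MvPolynomial (Fin N) k, p ≠ 0 ∧ rename v p ∈ J := by
  have hdep : ¬ AlgebraicIndependent k fun t => Ideal.Quotient.mk J (X (v t)) :=
    fun h => (natCast_le_ringKrullDim_of_algebraicIndependent h).not_gt hJ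
  rw [algebraicIndependent_iff] at hdep
  push Not at hdep
  obtain ⟨p, hp, hp0⟩ := hdep
  have hrename : (aeval fun t => Ideal.Quotient.mk J (X (v t)))
      = (Ideal.Quotient.mkₐ k J).comp (rename v) := by
    ext
    simp
  rw [hrename] at hp
  exact ⟨p, hp0, Ideal.Quotient.eq_zero_iff_mem.mp hp⟩

end Dependence

section Chart

variable {k : Type} [Field k] {n m : ℕ}

lemma exists_pow_mul_mem_of_mem_satIdeal {I C : Ideal (PolyS k n m)} {g F : PolyS k n m}
    (hg : g ∈ C) (hF : F ∈ satIdeal I C) : ∃ N : ℕ, g ^ N * F ∈ I := by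
  rw [satIdeal] at hF
  induction hF using Submodule.iSup_induction' with
  | mem t F hF =>
    exact ⟨t, mul_comm F (g ^ t) ▸ Submodule.mem_colon.mp hF (g ^ t) (Set.pow_mem_pow hg)⟩
  | zero => exact ⟨0, by simp⟩
  | add F F' _ _ hF hF' =>
    obtain ⟨N, hN⟩ := hF
    obtain ⟨N', hN'⟩ := hF'
    have hsplit : g ^ (N + N') * (F + F') = g ^ N' * (g ^ N * F) + g ^ N * (g ^ N' * F') := by ring
    exact ⟨N + N', hsplit ▸ I.add_mem (I.mul_mem_left _ hN) (I.mul_mem_left _ hN')⟩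

lemma X_mul_X_mem_Birr (i : Fin (n + 1)) (j : Fin (m + 1)) :
    (X (Sum.inl i) * X (Sum.inr j) : PolyS k n m) ∈ Birr k n m :=
  Ideal.mul_mem_mul (Ideal.subset_span ⟨i, rfl⟩) (Ideal.subset_span ⟨j, rfl⟩)

section

variable {r : ℕ} {f : Fin r → PolyS k n m} {δ : Fin r → ℤ × ℤ}

lemma exists_monicIn_pow_mul_mem_span
    (hf : ∀ i, f i ∈ grad k n m (δ i))
    (hdim : ringKrullDim (PolyS k n m ⧸ satIdeal (Ideal.span (Set.range f)) (Birr k n m)) ≤ 2)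
    {u l v : Fin (n + 1) ⊕ Fin (m + 1)} (hul : u ≠ l) (hlv : l ≠ v) (huv : u ≠ v)
    (hw : wt n m l = wt n m u)
    (hinj : Function.Injective fun p : ℕ × ℕ => p.1 • wt n m u + p.2 • wt n m v)
    (hB : X u * X v ∈ Birr k n m) :
    ∃ G, MonicIn {u} l G ∧ ∃ N, (X u * X v) ^ N * G ∈ Ideal.span (Set.range f) := by
  have hv : Function.Injective ![u, l, v] := by
    intro a b
    fin_cases a <;> fin_cases b <;> simp [hul, hlv, huv, hul.symm, hlv.symm, huv.symm]
  obtain ⟨p, hp0, hp⟩ := exists_rename_mem_of_ringKrullDim_lt (N := 3)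
    (hdim.trans_lt (by exact_mod_cast Nat.lt_succ_self 2)) ![u, l, v]
  obtain ⟨N, hN⟩ := exists_pow_mul_mem_of_mem_satIdeal hB hp
  have hF0 : (X u * X v) ^ N * rename ![u, l, v] p ≠ 0 :=
    mul_ne_zero (pow_ne_zero _ (mul_ne_zero (X_ne_zero _) (X_ne_zero _)))
      ((map_ne_zero_iff _ (rename_injective _ hv)).mpr hp0)
  have hX {i} (hi : i ∈ ({u, l, v} : Set _)) : (X i : PolyS k n m) ∈ supported k {u, l, v} :=
    Algebra.subset_adjoin (Set.mem_image_of_mem X hi)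
  have hrename : rename ![u, l, v] p ∈ supported k {u, l, v} := by
    classical
    refine mem_supported.mpr fun i hi => ?_
    obtain ⟨t, -, rfl⟩ := mem_image.mp (vars_rename _ _ hi)
    fin_cases t <;> simp
  obtain ⟨H, hH, hH0, hHs, γ, hHγ⟩ := exists_isWeightedHomogeneous_mem (w := wt n m)
    (fun F hF γ => weightedHomogeneousComponent_mem_span_range hf hF γ) hN hF0
    (mul_mem (pow_mem (mul_mem (hX (by simp)) (hX (by simp))) N) hrename)
  obtain ⟨G, hG, N', hdvd⟩ :=
    exists_monicIn_dvd_of_isWeightedHomogeneous hul hlv huv hw hinj hH0 hHγ hHs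
  exact ⟨G, hG, N', Ideal.mem_of_dvd _ hdvd hH⟩

lemma exists_monicIn_pow_mul_mem_span_of_ne
    (hf : ∀ i, f i ∈ grad k n m (δ i))
    (hdim : ringKrullDim (PolyS k n m ⧸ satIdeal (Ideal.span (Set.range f)) (Birr k n m)) ≤ 2)
    (i : Fin (n + 1)) (j : Fin (m + 1)) {l : Fin (n + 1) ⊕ Fin (m + 1)}
    (hl : l ∉ ({Sum.inl i, Sum.inr j} : Set _)) :
    ∃ G, MonicIn {Sum.inl i, Sum.inr j} l G ∧
      ∃ N, (X (Sum.inl i) * X (Sum.inr j)) ^ N * G ∈ Ideal.span (Set.range f) := by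
  have hB := X_mul_X_mem_Birr (k := k) i j
  simp only [Set.mem_insert_iff, Set.mem_singleton_iff, not_or] at hl
  rcases l with l | l
  · obtain ⟨G, hG, hN⟩ := exists_monicIn_pow_mul_mem_span hf hdim (Ne.symm hl.1) hl.2
      Sum.inl_ne_inr rfl (fun p p' h => by simpa [wt, Prod.ext_iff] using h) hB
    exact ⟨G, hG.mono (by simp), hN⟩
  · rw [mul_comm] at hB ⊢
    obtain ⟨G, hG, hN⟩ := exists_monicIn_pow_mul_mem_span hf hdim (Ne.symm hl.2) hl.1
      Sum.inr_ne_inl rfl (fun p p' h => by simpa [wt, Prod.ext_iff, and_comm] using h) hB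
    exact ⟨G, hG.mono (by simp), hN⟩

/-- In the chart `x_i y_j ≠ 0`, each of the other `n + m` variables is integral modulo `f`, so `f`
has grade at least `n + m` there. -/
theorem exists_koszul_eq_X_mul_X_pow_smul
    (hf : ∀ i, f i ∈ grad k n m (δ i))
    (hdim : ringKrullDim (PolyS k n m ⧸ satIdeal (Ideal.span (Set.range f)) (Birr k n m)) ≤ 2)
    (hr : r ≤ n + m) (i : Fin (n + 1)) (j : Fin (m + 1)) {z : Finset (Fin r) → PolyS k n m} {q : ℕ}
    (hq : 1 ≤ q) (hz : ∀ U, #U < q → z U = 0)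
    (hfz : koszul f z = 0) :
    ∃ (N : ℕ) (v : Finset (Fin r) → PolyS k n m),
      koszul f v = (X (Sum.inl i) * X (Sum.inr j) : PolyS k n m) ^ N • z := by
  classical
  choose! G hG hGf using
    fun l (hl : l ∉ ({Sum.inl i, Sum.inr j} : Set (Fin (n + 1) ⊕ Fin (m + 1)))) =>
      exists_monicIn_pow_mul_mem_span_of_ne hf hdim i j hl
  let others := ({Sum.inl i, Sum.inr j}ᶜ : Finset (Fin (n + 1) ⊕ Fin (m + 1)))
  have hothers {l} (hl : l ∈ others.toList) : l ∉ ({Sum.inl i, Sum.inr j} : Set _) := by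
    simpa [others] using hl
  have hcard : #others = n + m := by
    rw [card_compl, card_pair Sum.inl_ne_inr, Fintype.card_sum, Fintype.card_fin, Fintype.card_fin]
    lia
  refine exists_koszul_eq_pow_smul (isWeaklyRegular_of_monicIn others.nodup_toList
    (fun l hl => hothers hl) fun l hl => hG l (hothers hl)) ?_ ?_ hz hfz
  · rintro _ hF
    obtain ⟨l, hl, rfl⟩ := List.mem_map.mp hF
    exact hGf l (hothers hl)
  · rw [List.length_map, length_toList, hcard, Fintype.card_fin]
    lia

end

end Chart

section Graded

variable {k σ G : Type*} [Field k] [AddCommGroup G] {w : σ → G} {γ : G}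

lemma mul_weightedHomogeneousComponent {p : MvPolynomial σ k} (hp : IsWeightedHomogeneous w p γ)
    (γ' : G) (x : MvPolynomial σ k) :
    p * weightedHomogeneousComponent w γ' x = weightedHomogeneousComponent w (γ + γ') (p * x) := by
  classical
  let _ := weightedGradedAlgebra k w
  have := DirectSum.coe_decompose_mul_add_of_left_mem (weightedHomogeneousSubmodule k w)
    (j := γ') (b := x) hp
  simpa [← weightedDecomposition.decompose'_apply] using this.symm

variable {ι : Type*} [Fintype ι] [LinearOrder ι] {f : ι → MvPolynomial σ k} {δ : ι → G} {q : ℕ}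

lemma exists_mem_cochains_weightedHomogeneousSubmodule_koszul_eq
    (hf : ∀ i, IsWeightedHomogeneous w (f i) (δ i)) {z v : Finset ι → MvPolynomial σ k}
    (hz : z ∈ cochains (fun U => weightedHomogeneousSubmodule k w (γ - ∑ i ∈ U, δ i)) q)
    (hv : koszul f v = z) :
    ∃ u ∈ cochains (fun U => weightedHomogeneousSubmodule k w (γ - ∑ i ∈ U, δ i)) (q + 1),
      koszul f u = z := by
  refine exists_mem_cochains_koszul_eq
    (fun U => (weightedHomogeneousComponent w (γ - ∑ i ∈ U, δ i)).toAddMonoidHom)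
    (fun U x => weightedHomogeneousComponent_isWeightedHomogeneous _ x) (fun U x hx =>
      IsWeightedHomogeneous.weightedHomogeneousComponent_same hx) (fun U i hi x => ?_) hz hv
  simp only [LinearMap.toAddMonoidHom_coe, smul_eq_mul, mul_weightedHomogeneousComponent (hf i),
    sum_insert hi]
  congr 2
  abel

end Graded

section Laurent

open AddMonoidAlgebra (single)

variable {k σ G : Type*} [Field k] [AddCommGroup G]

/-- The exponent of a monomial, as the exponent of a Laurent monomial. -/
def intExponent : (σ →₀ ℕ) →+ (σ → ℤ) :=
  ((Nat.castAddMonoidHom ℤ).compLeft σ).comp Finsupp.coeFnAddHom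

lemma intExponent_apply (s : σ →₀ ℕ) (t : σ) : intExponent s t = s t := rfl

lemma intExponent_injective : Function.Injective (intExponent (σ := σ)) := fun s s' h =>
  Finsupp.ext fun t => by simpa [intExponent_apply] using congrFun h t

/-- The inclusion of the polynomials into the Laurent polynomials. -/
def toLaurent : MvPolynomial σ k →+* AddMonoidAlgebra k (σ → ℤ) :=
  AddMonoidAlgebra.mapDomainRingHom k intExponent

lemma toLaurent_injective : Function.Injective (toLaurent (k := k) (σ := σ)) :=
  AddMonoidAlgebra.mapDomain_injective intExponent_injective

lemma toLaurent_monomial (s : σ →₀ ℕ) (a : k) :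
    toLaurent (monomial s a) = single (intExponent s) a :=
  AddMonoidAlgebra.mapDomain_single

variable [Fintype σ]

/-- The variables which occur with a negative exponent in a Laurent monomial. -/
def negs (g : σ → ℤ) : Finset σ := {t | g t < 0}

lemma mem_negs {g : σ → ℤ} {t : σ} : t ∈ negs g ↔ g t < 0 := by simp [negs]

lemma negs_intExponent (s : σ →₀ ℕ) : negs (intExponent s) = ∅ := by
  ext t
  simp [mem_negs, intExponent_apply]

lemma negs_neg_intExponent (s : σ →₀ ℕ) : negs (-intExponent s) = s.support := by
  ext t
  simp [mem_negs, intExponent_apply, Nat.pos_iff_ne_zero]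

lemma linearCombination_intExponent (w : σ → G) (s : σ →₀ ℕ) :
    Fintype.linearCombination ℤ w (intExponent s) = Finsupp.weight w s := by
  simp [Fintype.linearCombination_apply, intExponent_apply, Finsupp.weight_apply,
    Finsupp.sum_fintype]

/-- The Laurent polynomials of degree `γ` in which only the variables in `T` are inverted, i.e.
the degree-`γ` part of the localization of the polynomial ring at the product of `T`. -/
def laurentPiece (k : Type*) [Field k] (w : σ → G) (γ : G) (T : Finset σ) :
    Submodule k (AddMonoidAlgebra k (σ → ℤ)) :=
  AddMonoidAlgebra.supported k k {g | negs g ⊆ T ∧ Fintype.linearCombination ℤ w g = γ}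

variable {w : σ → G} {γ γ' : G} {T : Finset σ} {a b : AddMonoidAlgebra k (σ → ℤ)}

lemma mem_laurentPiece : a ∈ laurentPiece k w γ T ↔
    ∀ g, a.coeff g ≠ 0 → negs g ⊆ T ∧ Fintype.linearCombination ℤ w g = γ := by
  simp [laurentPiece, AddMonoidAlgebra.mem_supported, Set.subset_def]

lemma laurentPiece_mono {T' : Finset σ} (h : T ⊆ T') :
    laurentPiece k w γ T ≤ laurentPiece k w γ T' :=
  AddMonoidAlgebra.supported_mono fun _ hg => ⟨hg.1.trans h, hg.2⟩

lemma negs_add_subset {g g' : σ → ℤ} (h : negs g ⊆ T) (h' : negs g' ⊆ T) : negs (g + g') ⊆ T := by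
  intro t ht
  by_contra hT
  have := mem_negs.not.mp fun hg => hT (h hg)
  have := mem_negs.not.mp fun hg => hT (h' hg)
  have := mem_negs.mp ht
  simp only [Pi.add_apply] at this
  lia

lemma mul_mem_laurentPiece (ha : a ∈ laurentPiece k w γ T) (hb : b ∈ laurentPiece k w γ' T) :
    a * b ∈ laurentPiece k w (γ + γ') T := by
  classical
  refine mem_laurentPiece.mpr fun g hg => ?_
  obtain ⟨g₁, h₁, g₂, h₂, rfl⟩ :=
    mem_add.mp (AddMonoidAlgebra.support_coeff_mul_subset a b (Finsupp.mem_support_iff.mpr hg))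
  obtain ⟨hT₁, rfl⟩ := mem_laurentPiece.mp ha g₁ (Finsupp.mem_support_iff.mp h₁)
  obtain ⟨hT₂, rfl⟩ := mem_laurentPiece.mp hb g₂ (Finsupp.mem_support_iff.mp h₂)
  exact ⟨negs_add_subset hT₁ hT₂, map_add _ _ _⟩

lemma single_mem_laurentPiece {g : σ → ℤ} (hg : negs g ⊆ T) (c : k) :
    single g c ∈ laurentPiece k w (Fintype.linearCombination ℤ w g) T := by
  classical
  refine mem_laurentPiece.mpr fun g' hg' => ?_
  obtain rfl : g = g' := by
    by_contra hne
    exact hg' (by simp [hne])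
  exact ⟨hg, rfl⟩

lemma toLaurent_mem_laurentPiece {p : MvPolynomial σ k} (hp : IsWeightedHomogeneous w p γ)
    (T : Finset σ) : toLaurent p ∈ laurentPiece k w γ T := by
  rw [p.as_sum, map_sum]
  refine sum_mem fun s hs => ?_
  rw [toLaurent_monomial, ← hp (mem_support_iff.mp hs), ← linearCombination_intExponent]
  exact single_mem_laurentPiece (by simp [negs_intExponent]) _

lemma exists_isWeightedHomogeneous_toLaurent_eq (ha : a ∈ laurentPiece k w γ ∅) :
    ∃ p : MvPolynomial σ k, IsWeightedHomogeneous w p γ ∧ toLaurent p = a := by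
  classical
  have exists_exponent (g) (hg : a.coeff g ≠ 0) : ∃ s, intExponent s = g := by
    have hneg (t : σ) : 0 ≤ g t := by
      simpa [mem_negs] using fun h =>
        notMem_empty t ((mem_laurentPiece.mp ha g hg).1 (mem_negs.mpr h))
    exact ⟨Finsupp.equivFunOnFinite.symm fun t => (g t).toNat,
      funext fun t => Int.toNat_of_nonneg (hneg t)⟩
  let p : MvPolynomial σ k := AddMonoidAlgebra.comapDomain intExponent intExponent_injective a
  refine ⟨p, fun s hs => ?_, AddMonoidAlgebra.mapDomain_comapDomain
    (fun g hg => exists_exponent g (Finsupp.mem_support_iff.mp hg)) intExponent_injective⟩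
  rw [← linearCombination_intExponent]
  exact (mem_laurentPiece.mp ha _ hs).2

lemma exists_single_mul_mem_laurentPiece_empty {ι : Type*} [Finite ι] {γ : ι → G}
    {c : ι → AddMonoidAlgebra k (σ → ℤ)} (hc : ∀ U, c U ∈ laurentPiece k w (γ U) T) :
    ∃ s : σ →₀ ℕ, s.support ⊆ T ∧
      ∀ U, single (intExponent s) 1 * c U ∈ laurentPiece k w (Finsupp.weight w s + γ U) ∅ := by
  classical
  cases nonempty_fintype ι
  let s : σ →₀ ℕ := Finsupp.equivFunOnFinite.symm fun t =>
    univ.sup fun U => (c U).coeff.support.sup fun g => (-g t).toNat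
  have hs {U g} (hg : (c U).coeff g ≠ 0) (t : σ) : 0 ≤ s t + g t := by
    have h₁ : (-g t).toNat ≤ (c U).coeff.support.sup fun g => (-g t).toNat :=
      le_sup (f := fun g : σ → ℤ => (-g t).toNat) (Finsupp.mem_support_iff.mpr hg)
    have h₂ : (-g t).toNat ≤ s t :=
      h₁.trans (le_sup (f := fun U => (c U).coeff.support.sup fun g => (-g t).toNat) (mem_univ U))
    lia
  refine ⟨s, fun t ht => ?_, fun U => mem_laurentPiece.mpr fun g hg => ?_⟩
  · by_contra hT
    refine Finsupp.mem_support_iff.mp ht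
      (Nat.le_zero.mp (Finset.sup_le fun U _ => Finset.sup_le fun g hg => ?_))
    have := mem_negs.not.mp fun h =>
      hT ((mem_laurentPiece.mp (hc U) g (Finsupp.mem_support_iff.mp hg)).1 h)
    lia
  · obtain ⟨g', rfl⟩ : ∃ g', intExponent s + g' = g := ⟨g - intExponent s, add_sub_cancel _ _⟩
    have hg' : (c U).coeff g' ≠ 0 := by simpa using hg
    refine ⟨fun t ht => absurd (mem_negs.mp ht) (not_lt.mpr (hs hg' t)), ?_⟩
    rw [map_add, linearCombination_intExponent, (mem_laurentPiece.mp (hc U) g' hg').2]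

variable {ι : Type*} [Fintype ι] [LinearOrder ι] {f : ι → MvPolynomial σ k} {δ : ι → G} {q : ℕ}

/-- The condition `hker` says that the class of every Koszul cycle dies after inverting `T`. -/
theorem exists_mem_cochains_laurentPiece_koszul_eq (hf : ∀ i, IsWeightedHomogeneous w (f i) (δ i))
    (hker : ∀ z : Finset ι → MvPolynomial σ k, (∀ U, #U < q → z U = 0) → koszul f z = 0 →
      ∃ s : σ →₀ ℕ, s.support ⊆ T ∧ ∃ v, koszul f v = monomial s (1 : k) • z)
    {c : Finset ι → AddMonoidAlgebra k (σ → ℤ)}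
    (hc : c ∈ cochains (fun U => laurentPiece k w (γ - ∑ i ∈ U, δ i) T) q)
    (hfc : koszul (fun i => toLaurent (f i)) c = 0) :
    ∃ b ∈ cochains (fun U => laurentPiece k w (γ - ∑ i ∈ U, δ i) T) (q + 1),
      koszul (fun i => toLaurent (f i)) b = c := by
  have koszul_toLaurent (z : Finset ι → MvPolynomial σ k) :
      koszul (fun i => toLaurent (f i)) (fun U => toLaurent (z U)) =
        fun U => toLaurent (koszul f z U) :=
    koszul_map toLaurent.toAddMonoidHom (fun i x => map_mul toLaurent (f i) x) z
  obtain ⟨s₀, hs₀, hc₀⟩ := exists_single_mul_mem_laurentPiece_empty hc.1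
  choose z hz hzc using fun U => exists_isWeightedHomogeneous_toLaurent_eq (hc₀ U)
  have hz0 (U) (hU : #U ≠ q) : z U = 0 :=
    toLaurent_injective (by rw [hzc, hc.2 U hU, mul_zero, map_zero])
  have hzc' : (fun U => toLaurent (z U)) = single (intExponent s₀) (1 : k) • c := funext hzc
  have hfz : koszul f z = 0 := by
    refine funext fun U => toLaurent_injective ?_
    have := koszul_toLaurent z
    rw [hzc', map_smul, hfc, smul_zero] at this
    simpa using (congrFun this U).symm
  obtain ⟨s, hs, v, hv⟩ := hker z (fun U hU => hz0 U hU.ne) hfz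
  have hsz : monomial s (1 : k) • z ∈
      cochains (fun U => weightedHomogeneousSubmodule k w
        (Finsupp.weight w s + Finsupp.weight w s₀ + γ - ∑ i ∈ U, δ i)) q := by
    refine ⟨fun U => ?_, fun U hU => by simp [hz0 U hU]⟩
    have h := (isWeightedHomogeneous_monomial w s (1 : k) rfl).mul (hz U)
    rwa [← add_sub_assoc, ← add_sub_assoc, ← add_assoc] at h
  obtain ⟨u, hu, hfu⟩ := exists_mem_cochains_weightedHomogeneousSubmodule_koszul_eq hf hsz hv
  have he : negs (-intExponent (s + s₀)) ⊆ T := by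
    rw [negs_neg_intExponent]
    classical exact Finsupp.support_add.trans (union_subset hs hs₀)
  refine ⟨single (-intExponent (s + s₀)) (1 : k) • fun U => toLaurent (u U), ⟨fun U => ?_,
    fun U hU => by simp [hu.2 U hU]⟩, ?_⟩
  · have h := mul_mem_laurentPiece (single_mem_laurentPiece he (1 : k))
      (toLaurent_mem_laurentPiece (hu.1 U) T)
    rwa [map_neg, linearCombination_intExponent, map_add, add_sub_assoc, neg_add_cancel_left] at h
  · rw [map_smul, koszul_toLaurent, hfu]
    ext1 U
    simp only [Pi.smul_apply, smul_eq_mul, map_mul, toLaurent_monomial, hzc, ← mul_assoc,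
      AddMonoidAlgebra.single_mul_single, map_add, mul_one, neg_add_cancel]
    rw [← AddMonoidAlgebra.one_def, one_mul]

end Laurent

section MixedCech

variable {σ k M M' : Type*} [LinearOrder σ] [CommRing k] [AddCommGroup M] [Module k M]
  [AddCommGroup M'] [Module k M'] {X T : Finset σ} {P : Finset σ → Submodule k M} {p q : ℕ}
  {c : Finset σ → M} {s : M}

lemma contract_mem_cochains {v : σ} (hP : ∀ T, P (insert v T) ≤ P T) (hc : c ∈ cochains P (q + 1)) :
    contract v c ∈ cochains P q := by
  refine ⟨fun T => ?_, fun T hT => ?_⟩ <;> rw [contract_apply] <;> split_ifs with hv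
  · exact zero_mem _
  · exact zsmul_mem (hP T (hc.1 _)) _
  · rfl
  · rw [hc.2 _ (by rw [card_insert_of_notMem hv]; lia), smul_zero]

lemma single_mem_cochains (hs : s ∈ P ∅) : Pi.single ∅ s ∈ cochains P 0 := by
  refine ⟨fun T => ?_, fun T hT => by simp [card_ne_zero.mp hT |>.ne_empty]⟩
  obtain rfl | hT := eq_or_ne T ∅
  · simpa using hs
  · simp [hT]

variable [Fintype σ]

lemma cech_mem_cochains (hP : Monotone P) (hc : c ∈ cochains P q) :
    cech c ∈ cochains P (q + 1) := by
  refine ⟨fun T => ?_, fun T hT => ?_⟩ <;> rw [cech_apply]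
  · exact sum_mem fun i _ => zsmul_mem (hP (erase_subset i T) (hc.1 _)) _
  · refine sum_eq_zero fun i hi => ?_
    rw [hc.2 _ (by have := card_erase_add_one hi; lia), smul_zero]

/-- The cochain which restricts the global section `s` to each of the open sets indexed by `X`. -/
def augmentation (X : Finset σ) : M →+ (Finset σ → M) where
  toFun s T := if T ⊆ X then cech (Pi.single ∅ s) T else 0
  map_zero' := by ext; simp
  map_add' s s' := by
    ext T
    simp only [Pi.single_add, map_add, Pi.add_apply]
    split_ifs <;> simp

lemma augmentation_apply (X T : Finset σ) (s : M) :
    augmentation X s T = if T ⊆ X then cech (Pi.single ∅ s) T else 0 := rfl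

lemma augmentation_apply_of_subset_compl (h : T ⊆ Xᶜ) (s : M) : augmentation X s T = 0 := by
  rw [augmentation_apply]
  split_ifs with hX
  · obtain rfl : T = ∅ := subset_empty.mp fun x hx => absurd (hX hx) (mem_compl.mp (h hx))
    simp [cech_apply]
  · rfl

lemma cech_single_empty_singleton (v : σ) (s : M) :
    cech (Pi.single ∅ s) {v} = shuffleSign {v} v • s := by
  simp [cech_apply]

lemma augmentation_injective (hX : X.Nonempty) :
    Function.Injective (augmentation X : M →+ (Finset σ → M)) := by
  obtain ⟨v, hv⟩ := hX
  refine (injective_iff_map_eq_zero _).mpr fun s hs => ?_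
  have h := congrArg (shuffleSign {v} v • ·) (congrFun hs {v})
  simpa [augmentation_apply, hv, cech_single_empty_singleton, smul_smul, shuffleSign_mul_self]
    using h

lemma augmentation_map (φ : M →+ M') (s : M) :
    augmentation X (φ s) = fun T => φ (augmentation X s T) := by
  ext T
  have hφ : (fun T => φ ((Pi.single ∅ s : Finset σ → M) T)) = Pi.single ∅ (φ s) :=
    funext fun T => by by_cases hT : T = ∅ <;> simp [hT]
  rw [augmentation_apply, augmentation_apply, ← hφ, cech_map]
  split_ifs <;> simp

/-- The terms of the augmented Čech complex of the cover indexed by the products of an element of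
`X` and an element of `Xᶜ`, in the model whose cochains live on the sets `T` which meet both `X` and
`Xᶜ`. In degree `p + 1` these are the cochains on the `T` with `p + 2` elements; the term in degree
`0` is `P ∅`, embedded by `augmentation X`. -/
def mixedCech (X : Finset σ) (P : Finset σ → Submodule k M) (p : ℕ) :
    Submodule k (Finset σ → M) where
  carrier := {c | c ∈ cochains P (p + 1) ∧
    ∃ s ∈ P ∅, ∀ T, T ⊆ X ∨ T ⊆ Xᶜ → c T = augmentation X s T}
  zero_mem' := ⟨zero_mem _, 0, zero_mem _, by simp⟩
  add_mem' := by
    rintro c c' ⟨hc, s, hs, hcs⟩ ⟨hc', s', hs', hcs'⟩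
    exact ⟨add_mem hc hc', s + s', add_mem hs hs', fun T hT => by
      rw [Pi.add_apply, hcs T hT, hcs' T hT, map_add, Pi.add_apply]⟩
  smul_mem' := by
    rintro a c ⟨hc, s, hs, hcs⟩
    exact ⟨Submodule.smul_mem _ a hc, a • s, Submodule.smul_mem _ a hs, fun T hT =>
      (congrArg (a • ·) (hcs T hT)).trans
        (congrFun (augmentation_map (DistribSMul.toAddMonoidHom M a) s) T).symm⟩

lemma mem_mixedCech_of_forall_eq_zero (hc : c ∈ cochains P (p + 1))
    (h : ∀ T, T ⊆ X ∨ T ⊆ Xᶜ → c T = 0) : c ∈ mixedCech X P p :=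
  ⟨hc, 0, zero_mem _, fun T hT => by simp [h T hT]⟩

lemma eq_zero_of_mem_mixedCech_succ (hc : c ∈ mixedCech X P (p + 1)) (hT : T ⊆ X ∨ T ⊆ Xᶜ) :
    c T = 0 := by
  obtain ⟨hc, s, -, hcs⟩ := hc
  by_cases hcard : #T = p + 2
  · have hsingle : (Pi.single ∅ s : Finset σ → M) ∈
        cochains (⊤ : Finset σ → Submodule k M) 0 := single_mem_cochains trivial
    rw [hcs T hT, augmentation_apply, (cech_mem_cochains monotone_const hsingle).2 T (by lia),
      ite_self]
  · exact hc.2 T hcard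

lemma augmentation_mem_mixedCech (hP : Monotone P) (hs : s ∈ P ∅) :
    augmentation X s ∈ mixedCech X P 0 := by
  have h := cech_mem_cochains hP (single_mem_cochains hs)
  refine ⟨⟨fun T => ?_, fun T hT => ?_⟩, s, hs, fun _ _ => rfl⟩ <;> rw [augmentation_apply]
  · split_ifs
    exacts [h.1 T, zero_mem _]
  · rw [h.2 T hT, ite_self]

lemma exists_augmentation_eq (hc : c ∈ mixedCech X P 0) : ∃ s ∈ P ∅, augmentation X s = c := by
  obtain ⟨hc, s, hs, hcs⟩ := hc
  refine ⟨s, hs, funext fun T => ?_⟩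
  by_cases hT : #T = 1
  · obtain ⟨v, rfl⟩ := card_eq_one.mp hT
    exact (hcs {v} (by simpa using em (v ∈ X))).symm
  · have hs' := augmentation_mem_mixedCech (X := X) (P := (⊤ : Finset σ → Submodule k M))
      monotone_const (s := s) trivial
    rw [hc.2 T hT, hs'.1.2 T hT]

lemma mixedCech_map {P' : Finset σ → Submodule k M'} (φ : M →+ M')
    (hφ : ∀ T, ∀ x ∈ P T, φ x ∈ P' T) (hc : c ∈ mixedCech X P p) :
    (fun T => φ (c T)) ∈ mixedCech X P' p := by
  obtain ⟨hc, s, hs, hcs⟩ := hc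
  refine ⟨⟨fun T => hφ T _ (hc.1 T), fun T hT => by simp [hc.2 T hT]⟩, φ s, hφ _ s hs,
    fun T hT => ?_⟩
  simp only [augmentation_map, hcs T hT]

lemma cech_mem_mixedCech (hP : Monotone P) (hc : c ∈ mixedCech X P p) :
    cech c ∈ mixedCech X P (p + 1) := by
  obtain ⟨hc, s, -, hcs⟩ := hc
  refine mem_mixedCech_of_forall_eq_zero (cech_mem_cochains hP hc) ?_
  rintro T (hT | hT)
  · have h : cech c T = cech (cech (Pi.single ∅ s)) T := cech_congr fun i _ => by
      have hi : T.erase i ⊆ X := (erase_subset i T).trans hT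
      rw [hcs _ (.inl hi), augmentation_apply, if_pos hi]
    rw [h, cech_cech, Pi.zero_apply]
  · have h : cech c T = cech (0 : Finset σ → M) T := cech_congr fun i _ => by
      have hi : T.erase i ⊆ Xᶜ := (erase_subset i T).trans hT
      rw [hcs _ (.inr hi), augmentation_apply_of_subset_compl hi, Pi.zero_apply]
    rw [h, map_zero, Pi.zero_apply]

lemma eq_zero_of_mem_mixedCech_zero (hX : Xᶜ.Nonempty) (hc : c ∈ mixedCech X P 0)
    (hcc : cech c = 0) : c = 0 := by
  obtain ⟨w, hw⟩ := hX
  have hw0 : contract w c = 0 := by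
    ext T
    rw [contract_apply]
    split_ifs with hwT
    · rfl
    obtain rfl | hT := eq_or_ne T ∅
    · obtain ⟨-, s, -, hcs⟩ := hc
      have h : insert w ∅ ⊆ Xᶜ := by simpa using hw
      rw [hcs _ (.inr h), augmentation_apply_of_subset_compl h, smul_zero, Pi.zero_apply]
    · rw [hc.1.2 _ (by rw [card_insert_of_notMem hwT]; simpa using hT), smul_zero, Pi.zero_apply]
  simpa [hw0, hcc] using (cech_contract_add w c).symm

end MixedCech

section ConstantAbove

variable {σ k : Type*} [LinearOrder σ] [CommRing k] (M : Type*) [AddCommGroup M] [Module k M]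

/-- The coefficient system with value `M` on the sets containing `N` and `0` on the others. -/
def constantAbove (k : Type*) [CommRing k] [Module k M] (N T : Finset σ) : Submodule k M :=
  if N ⊆ T then ⊤ else ⊥

variable {M} {N X T : Finset σ} {p : ℕ} {c : Finset σ → M}

lemma mem_constantAbove {x : M} : x ∈ constantAbove M k N T ↔ (x ≠ 0 → N ⊆ T) := by
  rw [constantAbove]
  split_ifs with h <;> simp [h]

lemma constantAbove_mono : Monotone (constantAbove M k N) := fun _ _ h _ hx =>
  mem_constantAbove.mpr fun h0 => (mem_constantAbove.mp hx h0).trans h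

lemma constantAbove_insert_le {v : σ} (hv : v ∉ N) (T : Finset σ) :
    constantAbove M k N (insert v T) ≤ constantAbove M k N T := fun _ hx =>
  mem_constantAbove.mpr fun h0 => (subset_insert_iff_of_notMem hv).mp (mem_constantAbove.mp hx h0)

lemma eq_zero_of_mem_cochains_constantAbove {q : ℕ} {A : Finset σ}
    (hc : c ∈ cochains (constantAbove M k N) q) (hA : A ⊆ N) (h : N = A → #A ≠ q) (hT : T ⊆ A) :
    c T = 0 := by
  by_contra h0
  have hNT := mem_constantAbove.mp (hc.1 T) h0
  obtain rfl : T = A := hT.antisymm (hA.trans hNT)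
  exact h (hNT.antisymm hA) (by_contra fun hq => h0 (hc.2 T hq))

lemma contract_eq_zero_of_subset {v : σ} {A : Finset σ} (hv : v ∈ A) (h : T ⊆ A)
    (hc : ∀ T ⊆ A, c T = 0) : contract v c T = 0 := by
  rw [contract_apply]
  split_ifs
  · rfl
  · rw [hc _ (insert_subset hv h), smul_zero]

variable [Fintype σ]

lemma contract_mem_mixedCech {v : σ} (hv : v ∉ N)
    (hc : c ∈ mixedCech X (constantAbove M k N) (p + 1))
    (h : ∀ T, T ⊆ X ∨ T ⊆ Xᶜ → contract v c T = 0) :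
    contract v c ∈ mixedCech X (constantAbove M k N) p :=
  mem_mixedCech_of_forall_eq_zero (contract_mem_cochains (constantAbove_insert_le hv) hc.1) h

lemma cech_eq_cech_single_empty (hc : ∀ T' ⊆ T, T'.Nonempty → c T' = 0) :
    cech c T = cech (Pi.single ∅ (c ∅)) T := by
  refine cech_congr fun i _ => ?_
  obtain h | h := (T.erase i).eq_empty_or_nonempty
  · rw [h, Pi.single_eq_same]
  · rw [Pi.single_eq_of_ne h.ne_empty, hc _ (erase_subset i T) h]

lemma cech_contract_of_cech_eq_zero (v : σ) (hcc : cech c = 0) : cech (contract v c) = c := by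
  simpa [hcc] using cech_contract_add v c

/-- Contracting with `v ∉ N` in `X` gives a preimage of `c`, up to its values on the subsets of
`Xᶜ`. These form a cocycle over `Xᶜ`, which is the coboundary of its contraction with `w`. -/
lemma exists_mem_mixedCech_constantAbove_cech_eq_of_notMem {v w : σ} (hv : v ∈ X) (hvN : v ∉ N)
    (hw : w ∈ Xᶜ) (hwN : w ∉ N) (hc : c ∈ mixedCech X (constantAbove M k N) (p + 1))
    (hcc : cech c = 0) : ∃ b ∈ mixedCech X (constantAbove M k N) p, cech b = c := by
  let b₀ := contract v c
  let β : Finset σ → M := fun T => if T ⊆ Xᶜ then b₀ T else 0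
  have hb₀ : cech b₀ = c := cech_contract_of_cech_eq_zero v hcc
  have hb₀P : b₀ ∈ cochains (constantAbove M k N) (p + 1) :=
    contract_mem_cochains (constantAbove_insert_le hvN) hc.1
  have hb₀X (T) (hT : T ⊆ X) : b₀ T = 0 :=
    contract_eq_zero_of_subset hv hT fun T hT => eq_zero_of_mem_mixedCech_succ hc (.inl hT)
  have hβP : β ∈ cochains (constantAbove M k N) (p + 1) := by
    refine ⟨fun T => ?_, fun T hT => by simp only [β, hb₀P.2 T hT, ite_self]⟩
    by_cases hT : T ⊆ Xᶜ
    exacts [by simpa only [β, if_pos hT] using hb₀P.1 T, by simp only [β, if_neg hT, zero_mem]]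
  have hβ (T) (hT : T ⊆ Xᶜ) : cech (contract w β) T = b₀ T := by
    have cech_β (T) (hT : T ⊆ Xᶜ) : cech β T = 0 := by
      rw [cech_congr (c' := b₀) fun i _ => if_pos ((erase_subset i T).trans hT), hb₀,
        eq_zero_of_mem_mixedCech_succ hc (.inr hT)]
    have h := congrFun (cech_contract_add w β) T
    rwa [Pi.add_apply, contract_eq_zero_of_subset hw hT cech_β, add_zero,
      show β T = b₀ T from if_pos hT] at h
  have hX (T) (hT : T ⊆ X) : cech (contract w β) T = cech (Pi.single ∅ (contract w β ∅)) T := by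
    refine cech_eq_cech_single_empty fun T' hT' ⟨t, ht⟩ => ?_
    have hβ0 : β (insert w T') = 0 := if_neg fun hsub =>
      mem_compl.mp (hsub (mem_insert_of_mem ht)) (hT (hT' ht))
    rw [contract_apply, hβ0, smul_zero, ite_self]
  have hwβ := contract_mem_cochains (constantAbove_insert_le hwN) hβP
  refine ⟨b₀ - cech (contract w β), ⟨sub_mem hb₀P (cech_mem_cochains constantAbove_mono hwβ),
    -contract w β ∅, neg_mem (hwβ.1 ∅), ?_⟩, by rw [map_sub, hb₀, cech_cech, sub_zero]⟩
  rintro T (hT | hT)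
  · rw [Pi.sub_apply, hb₀X T hT, hX T hT, map_neg, Pi.neg_apply, augmentation_apply, if_pos hT,
      zero_sub]
  · rw [Pi.sub_apply, hβ T hT, sub_self, augmentation_apply_of_subset_compl hT]

theorem exists_mem_mixedCech_constantAbove_cech_eq (hp : p + 2 < Fintype.card σ)
    (hX : N = X → #X ≠ p + 1) (hX' : N = Xᶜ → #Xᶜ ≠ p + 1)
    (hc : c ∈ mixedCech X (constantAbove M k N) (p + 1)) (hcc : cech c = 0) :
    ∃ b ∈ mixedCech X (constantAbove M k N) p, cech b = c := by
  have hcX (T) (hT : T ⊆ X) : c T = 0 := eq_zero_of_mem_mixedCech_succ hc (.inl hT)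
  have hcX' (T) (hT : T ⊆ Xᶜ) : c T = 0 := eq_zero_of_mem_mixedCech_succ hc (.inr hT)
  by_cases hXN : X ⊆ N <;> by_cases hXN' : Xᶜ ⊆ N
  · have hN : N = univ := eq_univ_of_forall fun t => by
      by_cases ht : t ∈ X
      exacts [hXN ht, hXN' (mem_compl.mpr ht)]
    have hc0 : c = 0 := funext fun T =>
      eq_zero_of_mem_cochains_constantAbove hc.1 hN.ge (fun _ => by rw [card_univ]; lia)
        (subset_univ T)
    exact ⟨0, zero_mem _, by rw [hc0, map_zero]⟩
  · obtain ⟨w, hw, hwN⟩ := not_subset.mp hXN'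
    refine ⟨contract w c, contract_mem_mixedCech hwN hc ?_, cech_contract_of_cech_eq_zero w hcc⟩
    rintro T (hT | hT)
    · exact eq_zero_of_mem_cochains_constantAbove
        (contract_mem_cochains (constantAbove_insert_le hwN) hc.1) hXN hX hT
    · exact contract_eq_zero_of_subset hw hT hcX'
  · obtain ⟨v, hv, hvN⟩ := not_subset.mp hXN
    refine ⟨contract v c, contract_mem_mixedCech hvN hc ?_, cech_contract_of_cech_eq_zero v hcc⟩
    rintro T (hT | hT)
    · exact contract_eq_zero_of_subset hv hT hcX
    · exact eq_zero_of_mem_cochains_constantAbove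
        (contract_mem_cochains (constantAbove_insert_le hvN) hc.1) hXN' hX' hT
  · obtain ⟨v, hv, hvN⟩ := not_subset.mp hXN
    obtain ⟨w, hw, hwN⟩ := not_subset.mp hXN'
    exact exists_mem_mixedCech_constantAbove_cech_eq_of_notMem hv hvN hw hwN hc hcc

end ConstantAbove

section LaurentRow

open AddMonoidAlgebra (single)

variable {k σ G : Type*} [Field k]

lemma sum_single_coeff_of_support_subset {E : Finset (σ → ℤ)} {a : AddMonoidAlgebra k (σ → ℤ)}
    (hE : a.coeff.support ⊆ E) : ∑ g ∈ E, single g (a.coeff g) = a := by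
  classical
  ext g
  simpa [AddMonoidAlgebra.coeff_sum, Finsupp.single_apply] using
    fun hg => (Finsupp.notMem_support_iff.mp (mt (@hE g) hg)).symm

variable [AddCommGroup G] [LinearOrder σ] [Fintype σ] {w : σ → G} {γ : G}
  {X : Finset σ} {p : ℕ} {c : Finset σ → AddMonoidAlgebra k (σ → ℤ)}

lemma coeff_mem_constantAbove {T : Finset σ} {a : AddMonoidAlgebra k (σ → ℤ)}
    (ha : a ∈ laurentPiece k w γ T) (g : σ → ℤ) : a.coeff g ∈ constantAbove k k (negs g) T :=
  mem_constantAbove.mpr fun hg => (mem_laurentPiece.mp ha g hg).1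

lemma single_mem_laurentPiece_of_mem_constantAbove {T : Finset σ} {g : σ → ℤ} {x : k}
    (hg : Fintype.linearCombination ℤ w g = γ) (hx : x ∈ constantAbove k k (negs g) T) :
    single g x ∈ laurentPiece k w γ T := by
  obtain rfl | h0 := eq_or_ne x 0
  · rw [AddMonoidAlgebra.single_zero]
    exact zero_mem _
  · exact hg ▸ single_mem_laurentPiece (mem_constantAbove.mp hx h0) x

theorem exists_mem_mixedCech_laurentPiece_cech_eq (hp : p + 2 < Fintype.card σ)
    (hX : ∀ g : σ → ℤ, Fintype.linearCombination ℤ w g = γ → negs g = X → #X ≠ p + 1)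
    (hX' : ∀ g : σ → ℤ, Fintype.linearCombination ℤ w g = γ → negs g = Xᶜ → #Xᶜ ≠ p + 1)
    (hc : c ∈ mixedCech X (laurentPiece k w γ) (p + 1)) (hcc : cech c = 0) :
    ∃ b ∈ mixedCech X (laurentPiece k w γ) p, cech b = c := by
  classical
  let E : Finset (σ → ℤ) := univ.biUnion fun T => (c T).coeff.support
  have hE (T) : (c T).coeff.support ⊆ E :=
    subset_biUnion_of_mem (fun T => (c T).coeff.support) (mem_univ T)
  have hEγ (g) (hg : g ∈ E) : Fintype.linearCombination ℤ w g = γ := by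
    obtain ⟨T, -, hT⟩ := mem_biUnion.mp hg
    exact (mem_laurentPiece.mp (hc.1.1 T) g (Finsupp.mem_support_iff.mp hT)).2
  have exists_coeff (g : σ → ℤ) : ∃ b, Fintype.linearCombination ℤ w g = γ →
      b ∈ mixedCech X (constantAbove k k (negs g)) p ∧ cech b = fun T => (c T).coeff g := by
    let φ : AddMonoidAlgebra k (σ → ℤ) →+ k :=
      (Finsupp.applyAddHom g).comp AddMonoidAlgebra.coeffAddEquiv.toAddMonoidHom
    by_cases hg : Fintype.linearCombination ℤ w g = γ
    · obtain ⟨b, hb⟩ := exists_mem_mixedCech_constantAbove_cech_eq hp (hX g hg) (hX' g hg)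
        (mixedCech_map φ (fun T x hx => coeff_mem_constantAbove hx g) hc)
        ((cech_map φ c).trans (by simp only [hcc, Pi.zero_apply, map_zero, Pi.zero_def]))
      exact ⟨b, fun _ => hb⟩
    · exact ⟨0, fun h => absurd h hg⟩
  choose b hb using exists_coeff
  refine ⟨∑ g ∈ E, fun T => single g (b g T), sum_mem fun g hg => ?_, ?_⟩
  · exact mixedCech_map (AddMonoidAlgebra.singleAddHom g)
      (fun T x => single_mem_laurentPiece_of_mem_constantAbove (hEγ g hg)) (hb g (hEγ g hg)).1
  · ext1 T
    rw [map_sum, Finset.sum_apply, ← sum_single_coeff_of_support_subset (hE T)]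
    refine sum_congr rfl fun g hg => ?_
    have := cech_map (AddMonoidAlgebra.singleAddHom g) (b g)
    rw [(hb g (hEγ g hg)).2] at this
    exact congrFun this T

end LaurentRow

section Bicomplex

/-- A first-quadrant double complex whose terms are subgroups of a single group, with the horizontal
differential `dh` raising the first index, the vertical differential `dv` lowering the second one,
and commuting squares. -/
structure Bicomplex (A : Type*) [AddCommGroup A] where
  term : ℕ → ℕ → AddSubgroup A
  dh : A →+ A
  dv : A →+ A
  dh_mem {p q : ℕ} {c : A} : c ∈ term p q → dh c ∈ term (p + 1) q
  dv_mem {p q : ℕ} {c : A} : c ∈ term p (q + 1) → dv c ∈ term p q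
  dh_dh (c : A) : dh (dh c) = 0
  dv_dv (c : A) : dv (dv c) = 0
  dh_dv (c : A) : dh (dv c) = dv (dh c)

namespace Bicomplex

variable {A : Type*} [AddCommGroup A] (C : Bicomplex A) {r : ℕ}

/-- The rows are exact in the columns `p ≥ 1`, at the heights `q ≥ p + 1`. -/
def RowExact : Prop :=
  ∀ p q, p + 2 ≤ q → ∀ c ∈ C.term (p + 1) q, C.dh c = 0 → ∃ b ∈ C.term p q, C.dh b = c

/-- The columns `p ≥ 1` are exact in positive degrees. -/
def ColumnExact : Prop :=
  ∀ p q, 1 ≤ q → ∀ c ∈ C.term (p + 1) q, C.dv c = 0 → ∃ b ∈ C.term (p + 1) (q + 1), C.dv b = c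

variable {C}

lemma exists_dv_eq_of_dh_eq_zero (hC : ∀ p q, r < q → C.term p q = ⊥) (hrow : C.RowExact)
    (hcol : C.ColumnExact) (j : ℕ) {p q : ℕ} (hj : r < q + j) (hp : p + 1 ≤ q) {c : A}
    (hc : c ∈ C.term (p + 1) q) (hv : C.dv c = 0) (hh : C.dh c = 0) :
    ∃ b ∈ C.term (p + 1) (q + 1), C.dv b = c ∧ C.dh b = 0 := by
  induction j generalizing p q c with
  | zero =>
    obtain rfl : c = 0 := by simpa [hC _ q hj] using hc
    exact ⟨0, zero_mem _, map_zero _, map_zero _⟩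
  | succ j ih =>
    obtain ⟨a, ha, rfl⟩ := hcol p q (by lia) c hc hv
    obtain ⟨v, hvm, hva, hv0⟩ := ih (by lia) (by lia) (C.dh_mem ha) (by rw [← C.dh_dv, hh])
      (C.dh_dh a)
    obtain ⟨u, hu, rfl⟩ := hrow _ _ (by lia) v hvm hv0
    exact ⟨a - C.dv u, sub_mem ha (C.dv_mem hu), by rw [map_sub, C.dv_dv, sub_zero],
      by rw [map_sub, C.dh_dv, hva, sub_self]⟩

theorem exists_dv_eq (hC : ∀ p q, r < q → C.term p q = ⊥) (hrow : C.RowExact)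
    (hcol : C.ColumnExact) (hinj : ∀ q, ∀ c ∈ C.term 0 q, C.dh c = 0 → c = 0) {q : ℕ} (hq : 1 ≤ q)
    {c : A} (hc : c ∈ C.term 0 q) (hv : C.dv c = 0) : ∃ b ∈ C.term 0 (q + 1), C.dv b = c := by
  obtain ⟨v, hvm, hvc, hv0⟩ := exists_dv_eq_of_dh_eq_zero hC hrow hcol (r + 1) (by lia) hq
    (C.dh_mem hc) (by rw [← C.dh_dv, hv, map_zero]) (C.dh_dh c)
  obtain ⟨u, hu, rfl⟩ := hrow _ _ (by lia) v hvm hv0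
  refine ⟨u, hu, sub_eq_zero.mp (hinj q _ (sub_mem (C.dv_mem hu) hc) ?_)⟩
  rw [map_sub, C.dh_dv, hvc, sub_self]

end Bicomplex

end Bicomplex

section KoszulCech

lemma exists_mem_cochains_forall_map_eq {k ι M M' : Type*} [CommRing k] [AddCommGroup M]
    [Module k M] [AddCommGroup M'] {P : Finset ι → Submodule k M} {φ : M →+ M'} {q : ℕ}
    {c : Finset ι → M'} (hc : ∀ U, #U ≠ q → c U = 0) (h : ∀ U, #U = q → ∃ b ∈ P U, φ b = c U) :
    ∃ b ∈ cochains P q, ∀ U, φ (b U) = c U := by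
  choose! b hb hbc using h
  refine ⟨fun U => if #U = q then b U else 0, ⟨fun U => ?_, fun U hU => if_neg hU⟩, fun U => ?_⟩ <;>
    dsimp only <;> split_ifs with hU
  exacts [hb U hU, zero_mem _, hbc U hU, by rw [map_zero, hc U hU]]

lemma koszul_eval {ι τ R M : Type*} [LinearOrder ι] [Fintype ι] [CommRing R] [AddCommGroup M]
    [Module R M] (f : ι → R) (c : Finset ι → τ → M) (t : τ) :
    koszul f (fun U => c U t) = fun U => koszul f c U t :=
  koszul_map (Pi.evalAddMonoidHom _ t) (fun _ _ => rfl) c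

lemma exists_koszul_eq_monomial_smul_of_mem {k σ ι : Type*} [Field k] [LinearOrder σ]
    [LinearOrder ι] [Fintype ι] {f : ι → MvPolynomial σ k} {T : Finset σ} {i j : σ}
    (hi : i ∈ T) (hj : j ∈ T)
    {z : Finset ι → MvPolynomial σ k} (h : ∃ (N : ℕ) (v : Finset ι → MvPolynomial σ k),
      koszul f v = (X i * X j : MvPolynomial σ k) ^ N • z) :
    ∃ s : σ →₀ ℕ, s.support ⊆ T ∧ ∃ v, koszul f v = monomial s (1 : k) • z := by
  obtain ⟨N, v, hv⟩ := h
  refine ⟨N • (Finsupp.single i 1 + Finsupp.single j 1), ?_, v, ?_⟩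
  · refine Finsupp.support_smul.trans (Finsupp.support_add.trans (union_subset ?_ ?_)) <;>
      refine Finsupp.support_single_subset.trans (by simpa)
  · rw [hv, X, X, monomial_mul, monomial_pow, mul_one, one_pow]

section

variable {k σ ι G : Type*} [Field k] [LinearOrder σ] [Fintype σ] [LinearOrder ι] [Fintype ι]
  [AddCommGroup G] {w : σ → G} {f : ι → MvPolynomial σ k} {δ : ι → G} {γ : G} {A : Finset σ}

lemma toLaurent_smul_mem_mixedCech {P : MvPolynomial σ k} {γ γ' : G}
    (hP : IsWeightedHomogeneous w P γ) {p : ℕ} {x : Finset σ → AddMonoidAlgebra k (σ → ℤ)}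
    (hx : x ∈ mixedCech A (laurentPiece k w γ') p) :
    toLaurent P • x ∈ mixedCech A (laurentPiece k w (γ + γ')) p :=
  mixedCech_map (DistribSMul.toAddMonoidHom _ (toLaurent P))
    (fun T _ => mul_mem_laurentPiece (toLaurent_mem_laurentPiece hP T)) hx

/-- The degree-`γ` part of the double complex with columns the Koszul complexes of `f` and with rows
the augmented Čech complexes of the cover indexed by `A` and `Aᶜ`. -/
def koszulCech (A : Finset σ) (γ : G) (hf : ∀ i, IsWeightedHomogeneous w (f i) (δ i)) :
    Bicomplex (Finset ι → Finset σ → AddMonoidAlgebra k (σ → ℤ)) where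
  term p q :=
    (cochains (fun U => mixedCech A (laurentPiece k w (γ - ∑ i ∈ U, δ i)) p) q).toAddSubgroup
  dh := cech.compLeft (Finset ι)
  dv := (koszul fun i => toLaurent (f i)).toAddMonoidHom
  dh_mem hc := ⟨fun U => cech_mem_mixedCech (fun _ _ => laurentPiece_mono) (hc.1 U),
    fun U hU => by simp [hc.2 U hU]⟩
  dv_mem hc := koszul_mem_cochains (fun U i hi x hx => by
    have h := toLaurent_smul_mem_mixedCech (hf i) hx
    rwa [sum_insert hi, add_sub, add_sub_add_left_eq_sub] at h) hc
  dh_dh c := funext fun U => cech_cech (c U)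
  dv_dv := koszul_koszul _
  dh_dv c := (koszul_map cech
    (fun i x => cech_map (AddMonoidHom.mulLeft (toLaurent (f i))) x) c).symm

variable {hf : ∀ i, IsWeightedHomogeneous w (f i) (δ i)}

lemma koszulCech_term_eq_bot {p q : ℕ} (hq : Fintype.card ι < q) :
    (koszulCech A γ hf).term p q = ⊥ :=
  (congrArg Submodule.toAddSubgroup (cochains_eq_bot hq)).trans Submodule.bot_toAddSubgroup

lemma koszulCech_rowExact (hcard : Fintype.card ι < Fintype.card σ)
    (hA : ∀ U : Finset ι, #A < #U → ∀ g : σ → ℤ,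
      Fintype.linearCombination ℤ w g = γ - ∑ i ∈ U, δ i → negs g ≠ A)
    (hA' : ∀ U : Finset ι, #Aᶜ < #U → ∀ g : σ → ℤ,
      Fintype.linearCombination ℤ w g = γ - ∑ i ∈ U, δ i → negs g ≠ Aᶜ) :
    (koszulCech A γ hf).RowExact := by
  intro p q hpq c hc hcc
  obtain ⟨b, hb, hbc⟩ := exists_mem_cochains_forall_map_eq
    (P := fun U => mixedCech A (laurentPiece k w (γ - ∑ i ∈ U, δ i)) p) (φ := cech) hc.2
    fun U hU => by
      have := card_le_univ U
      refine exists_mem_mixedCech_laurentPiece_cech_eq (by lia) (fun g hg hgA hAp => ?_)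
        (fun g hg hgA hAp => ?_) (hc.1 U) (congrFun hcc U)
      exacts [hA U (by lia) g hg hgA, hA' U (by lia) g hg hgA]
  exact ⟨b, hb, funext hbc⟩

lemma koszulCech_columnExact
    (hker : ∀ i ∈ A, ∀ j ∈ Aᶜ, ∀ q, 1 ≤ q → ∀ z : Finset ι → MvPolynomial σ k,
      (∀ U, #U < q → z U = 0) → koszul f z = 0 → ∃ (N : ℕ) (v : Finset ι → MvPolynomial σ k),
        koszul f v = (X i * X j : MvPolynomial σ k) ^ N • z) :
    (koszulCech A γ hf).ColumnExact := by
  intro p q hq c hc hcc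
  have exists_preimage (T : Finset σ) :
      ∃ b ∈ cochains (fun U => laurentPiece k w (γ - ∑ i ∈ U, δ i) T) (q + 1),
        koszul (fun i => toLaurent (f i)) b = (fun U => c U T) ∧
          ((T ⊆ A ∨ T ⊆ Aᶜ) ∨ #T ≠ p + 2 → b = 0) := by
    by_cases hT : (T ⊆ A ∨ T ⊆ Aᶜ) ∨ #T ≠ p + 2
    · refine ⟨0, zero_mem _, funext fun U => ?_, fun _ => rfl⟩
      rw [map_zero, Pi.zero_apply]
      exact (hT.elim (eq_zero_of_mem_mixedCech_succ (hc.1 U)) ((hc.1 U).1.2 T)).symm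
    · push Not at hT
      obtain ⟨j, hjT, hj⟩ := not_subset.mp hT.1.1
      obtain ⟨i, hiT, hi⟩ := not_subset.mp hT.1.2
      obtain ⟨b, hb, hbc⟩ := exists_mem_cochains_laurentPiece_koszul_eq hf (fun z hz hfz =>
        exists_koszul_eq_monomial_smul_of_mem hiT hjT <|
          hker i (by simpa using hi) j (mem_compl.mpr hj) q hq z hz hfz)
        ⟨fun U => (hc.1 U).1.1 T, fun U hU => congrFun (hc.2 U hU) T⟩
        ((koszul_eval _ c T).trans (funext fun U => congrFun (congrFun hcc U) T))
      exact ⟨b, hb, hbc, fun h => by simp_all⟩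
  choose b hb hbc hb0 using exists_preimage
  refine ⟨fun U T => b T U, ⟨fun U => mem_mixedCech_of_forall_eq_zero
    ⟨fun T => (hb T).1 U, fun T hT => congrFun (hb0 T (.inr hT)) U⟩
    fun T hT => congrFun (hb0 T (.inl hT)) U,
    fun U hU => funext fun T => (hb T).2 U hU⟩, funext₂ fun U T => ?_⟩
  exact (congrFun (koszul_eval _ (fun U T => b T U) T) U).symm.trans (congrFun (hbc T) U)

lemma dh_injOn_koszulCech (hA : Aᶜ.Nonempty) {q : ℕ}
    {c : Finset ι → Finset σ → AddMonoidAlgebra k (σ → ℤ)} (hc : c ∈ (koszulCech A γ hf).term 0 q)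
    (hcc : (koszulCech A γ hf).dh c = 0) : c = 0 :=
  funext fun U => eq_zero_of_mem_mixedCech_zero hA (hc.1 U) (congrFun hcc U)

end

theorem exists_mem_cochains_koszul_eq_of_koszul_eq_zero {k σ ι G : Type*} [Field k] [Fintype σ]
    [LinearOrder ι] [Fintype ι] [AddCommGroup G] {w : σ → G} {f : ι → MvPolynomial σ k}
    {δ : ι → G} {γ : G} {A : Finset σ} (hcard : Fintype.card ι < Fintype.card σ)
    (hA₀ : A.Nonempty) (hA₁ : ∃ t, t ∉ A) (hf : ∀ i, IsWeightedHomogeneous w (f i) (δ i))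
    (hker : ∀ i ∈ A, ∀ j ∉ A, ∀ q, 1 ≤ q → ∀ z : Finset ι → MvPolynomial σ k,
      (∀ U, #U < q → z U = 0) → koszul f z = 0 → ∃ (N : ℕ) (v : Finset ι → MvPolynomial σ k),
        koszul f v = (X i * X j : MvPolynomial σ k) ^ N • z)
    (hA : ∀ U : Finset ι, #A < #U → ∀ g : σ → ℤ,
      Fintype.linearCombination ℤ w g = γ - ∑ i ∈ U, δ i → ¬∀ t, g t < 0 ↔ t ∈ A)
    (hA' : ∀ U : Finset ι, Fintype.card σ < #A + #U → ∀ g : σ → ℤ,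
      Fintype.linearCombination ℤ w g = γ - ∑ i ∈ U, δ i → ¬∀ t, g t < 0 ↔ t ∉ A)
    {q : ℕ} (hq : 1 ≤ q) {z : Finset ι → MvPolynomial σ k}
    (hz : z ∈ cochains (fun U => weightedHomogeneousSubmodule k w (γ - ∑ i ∈ U, δ i)) q)
    (hfz : koszul f z = 0) :
    ∃ u ∈ cochains (fun U => weightedHomogeneousSubmodule k w (γ - ∑ i ∈ U, δ i)) (q + 1),
      koszul f u = z := by
  let _ : LinearOrder σ := LinearOrder.lift' (Fintype.equivFin σ) (Fintype.equivFin σ).injective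
  have hA₁' : Aᶜ.Nonempty := hA₁.imp fun _ => mem_compl.mpr
  have hrow : (koszulCech A γ hf).RowExact := koszulCech_rowExact hcard
    (fun U hU g hg h => hA U hU g hg fun t => by rw [← mem_negs, h])
    (fun U hU g hg h => hA' U (by rw [card_compl] at hU; lia) g hg
      fun t => by rw [← mem_negs, h, mem_compl])
  have hcol : (koszulCech A γ hf).ColumnExact :=
    koszulCech_columnExact fun i hi j hj => hker i hi j (mem_compl.mp hj)
  let φ : MvPolynomial σ k →+ (Finset σ → AddMonoidAlgebra k (σ → ℤ)) :=
    (augmentation A).comp toLaurent.toAddMonoidHom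
  have hφ : Function.Injective φ := (augmentation_injective hA₀).comp toLaurent_injective
  have koszul_φ (z : Finset ι → MvPolynomial σ k) :
      koszul (fun i => toLaurent (f i)) (fun U => φ (z U)) = fun U => φ (koszul f z U) := by
    refine koszul_map φ (fun i x => ?_) z
    exact (congrArg (augmentation A) (map_mul toLaurent (f i) x)).trans
      (augmentation_map (AddMonoidHom.mulLeft (toLaurent (f i))) (toLaurent x))
  have hφz : (fun U => φ (z U)) ∈ (koszulCech A γ hf).term 0 q :=
    ⟨fun U => augmentation_mem_mixedCech (fun _ _ => laurentPiece_mono)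
      (toLaurent_mem_laurentPiece (hz.1 U) ∅), fun U hU => by simp [hz.2 U hU]⟩
  obtain ⟨b, hb, hbz⟩ := Bicomplex.exists_dv_eq
    (fun _ _ => koszulCech_term_eq_bot) hrow hcol (fun _ _ => dh_injOn_koszulCech hA₁') hq hφz
    ((koszul_φ z).trans (by simp [hfz, Pi.zero_def]))
  obtain ⟨u, hu, hub⟩ := exists_mem_cochains_forall_map_eq (φ := φ) (c := b)
    (P := fun U => weightedHomogeneousSubmodule k w (γ - ∑ i ∈ U, δ i)) hb.2 fun U _ => by
      obtain ⟨s, hs, hsb⟩ := exists_augmentation_eq (hb.1 U)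
      obtain ⟨p, hp, rfl⟩ := exists_isWeightedHomogeneous_toLaurent_eq hs
      exact ⟨p, hp, hsb⟩
  refine ⟨u, hu, funext fun U => hφ ?_⟩
  rw [← congrFun (koszul_φ u) U, funext hub]
  exact congrFun hbz U

end KoszulCech

section EulerCharacteristic

section

variable {k V W : Type*} [Field k] [AddCommGroup V] [Module k V] [AddCommGroup W] [Module k W]

lemma finrank_map_add_finrank_inf_ker (L : V →ₗ[k] W) (N : Submodule k V) [FiniteDimensional k N] :
    Module.finrank k (N.map L) + Module.finrank k (N ⊓ LinearMap.ker L : Submodule k V) =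
      Module.finrank k N := by
  rw [← (L.domRestrict N).finrank_range_add_finrank_ker, LinearMap.range_domRestrict,
    LinearMap.ker_domRestrict, ← Submodule.finrank_map_subtype_eq, Submodule.map_comap_subtype]

lemma sum_neg_one_pow_mul_finrank (D : V →ₗ[k] V) (N : ℕ → Submodule k V)
    [∀ q, FiniteDimensional k (N q)]
    (hN : ∀ q, N (q + 1) ⊓ LinearMap.ker D = (N (q + 2)).map D) (r : ℕ) :
    ∑ q ∈ range (r + 1), (-1) ^ q * (Module.finrank k (N q) : ℤ) =
      Module.finrank k (N 0) - Module.finrank k ((N 1).map D) +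
        (-1) ^ r * Module.finrank k ((N (r + 1)).map D) := by
  induction r with
  | zero => simp
  | succ r ih =>
    rw [sum_range_succ, ih, ← finrank_map_add_finrank_inf_ker D (N (r + 1)), hN]
    push_cast
    ring

end

section

variable {ι k M : Type*} [Field k] [AddCommGroup M] [Module k M]

/-- A cochain concentrated in degree `q` is a family indexed by the subsets with `q` elements. -/
def cochainsEquiv (P : Finset ι → Submodule k M) (q : ℕ) :
    cochains P q ≃ₗ[k] ((U : {U : Finset ι // #U = q}) → P U) where
  toFun c U := ⟨c.1 U, c.2.1 U⟩
  invFun b := ⟨fun U => if hU : #U = q then b ⟨U, hU⟩ else 0,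
    fun U => by dsimp only; split_ifs; exacts [Subtype.prop _, zero_mem _], fun U hU => dif_neg hU⟩
  map_add' _ _ := rfl
  map_smul' _ _ := rfl
  left_inv c := Subtype.ext <| funext fun U => by
    by_cases hU : #U = q
    exacts [dif_pos hU, (dif_neg hU).trans (c.2.2 U hU).symm]
  right_inv b := funext fun U => Subtype.ext (dif_pos U.2)

variable (P : Finset ι → Submodule k M) [∀ U, FiniteDimensional k (P U)]

instance [Finite ι] (q : ℕ) : FiniteDimensional k (cochains P q) :=
  Module.Finite.equiv (cochainsEquiv P q).symm

variable [Fintype ι]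

lemma finrank_cochains (q : ℕ) :
    Module.finrank k (cochains P q) = ∑ U ∈ powersetCard q univ, Module.finrank k (P U) := by
  rw [(cochainsEquiv P q).finrank_eq, Module.finrank_pi_fintype]
  exact (sum_subtype _ (fun U => by simp [mem_powersetCard]) fun U => Module.finrank k (P U)).symm

lemma sum_neg_one_pow_card_mul_finrank {D : (Finset ι → M) →ₗ[k] (Finset ι → M)}
    (hD : ∀ q, cochains P (q + 1) ⊓ LinearMap.ker D = (cochains P (q + 2)).map D) :
    ∑ U, (-1) ^ #U * (Module.finrank k (P U) : ℤ) =
      Module.finrank k (cochains P 0) - Module.finrank k ((cochains P 1).map D) := by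
  calc ∑ U, (-1) ^ #U * (Module.finrank k (P U) : ℤ)
      = ∑ q ∈ range (Fintype.card ι + 1), (-1) ^ q * (Module.finrank k (cochains P q) : ℤ) := by
        rw [← powerset_univ, sum_powerset, card_univ]
        refine sum_congr rfl fun q _ => ?_
        rw [finrank_cochains, Nat.cast_sum, mul_sum]
        exact sum_congr rfl fun U hU => by rw [(mem_powersetCard.mp hU).2]
    _ = _ := by
        rw [sum_neg_one_pow_mul_finrank D _ hD, cochains_eq_bot (Nat.lt_succ_self _),
          Submodule.map_bot, finrank_bot, Nat.cast_zero, mul_zero, add_zero]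

end

section

variable {k σ ι G : Type*} [Field k] [LinearOrder ι] [Fintype ι] [AddCommGroup G] {w : σ → G}
  {f : ι → MvPolynomial σ k} {δ : ι → G} {γ : G}

lemma koszul_apply_empty (v : Finset ι → MvPolynomial σ k) :
    koszul f v ∅ = ∑ i, f i * v {i} := by
  simp [koszul_apply, shuffleSign]

lemma koszul_mem_cochains_weightedHomogeneousSubmodule
    (hf : ∀ i, IsWeightedHomogeneous w (f i) (δ i)) {q : ℕ} {c : Finset ι → MvPolynomial σ k}
    (hc : c ∈ cochains (fun U => weightedHomogeneousSubmodule k w (γ - ∑ i ∈ U, δ i)) (q + 1)) :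
    koszul f c ∈ cochains (fun U => weightedHomogeneousSubmodule k w (γ - ∑ i ∈ U, δ i)) q :=
  koszul_mem_cochains (fun U i hi x hx => by
    have h := (hf i).mul hx
    rwa [sum_insert hi, add_sub, add_sub_add_left_eq_sub] at h) hc

lemma exists_koszul_eq_of_apply_empty_mem_span {P : Finset ι → Submodule k (MvPolynomial σ k)}
    {z : Finset ι → MvPolynomial σ k} (hz : z ∈ cochains P 0)
    (h : z ∅ ∈ Ideal.span (Set.range f)) : ∃ v, koszul f v = z := by
  obtain ⟨a, ha⟩ := Ideal.mem_span_range_iff_exists_fun.mp h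
  let v : Finset ι → MvPolynomial σ k := fun U => if #U = 1 then ∑ i ∈ U, a i else 0
  have hv : koszul f v ∈ cochains (fun _ => (⊤ : Submodule k (MvPolynomial σ k))) 0 :=
    koszul_mem_cochains (fun _ _ _ _ _ => trivial) ⟨fun _ => trivial, fun U hU => if_neg hU⟩
  refine ⟨v, funext fun U => ?_⟩
  obtain rfl | hU := U.eq_empty_or_nonempty
  · rw [koszul_apply_empty, ← ha]
    simp [v, mul_comm]
  · rw [hv.2 U hU.card_ne_zero, hz.2 U hU.card_ne_zero]

lemma cochains_zero_inf_ker_mk (hf : ∀ i, IsWeightedHomogeneous w (f i) (δ i)) :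
    cochains (fun U => weightedHomogeneousSubmodule k w (γ - ∑ i ∈ U, δ i)) 0 ⊓
        LinearMap.ker ((Ideal.Quotient.mkₐ k (Ideal.span (Set.range f))).toLinearMap ∘ₗ
          LinearMap.proj ∅) =
      (cochains (fun U => weightedHomogeneousSubmodule k w (γ - ∑ i ∈ U, δ i)) 1).map
        ((koszul f).restrictScalars k) := by
  refine le_antisymm ?_ ?_
  · rintro z ⟨hz, hz'⟩
    obtain ⟨v, hv⟩ :=
      exists_koszul_eq_of_apply_empty_mem_span hz (Ideal.Quotient.eq_zero_iff_mem.mp hz')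
    exact exists_mem_cochains_weightedHomogeneousSubmodule_koszul_eq hf hz hv
  · rintro _ ⟨u, hu, rfl⟩
    refine ⟨koszul_mem_cochains_weightedHomogeneousSubmodule hf hu,
      Ideal.Quotient.eq_zero_iff_mem.mpr ?_⟩
    change koszul f u ∅ ∈ _
    rw [koszul_apply_empty]
    exact Ideal.sum_mem _ fun i _ => Ideal.mul_mem_right _ _ (Ideal.subset_span ⟨i, rfl⟩)

theorem finrank_map_mk_eq_sum [∀ γ, FiniteDimensional k (weightedHomogeneousSubmodule k w γ)]
    (hf : ∀ i, IsWeightedHomogeneous w (f i) (δ i))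
    (hexact : ∀ q, 1 ≤ q → ∀ z ∈ cochains (fun U =>
      weightedHomogeneousSubmodule k w (γ - ∑ i ∈ U, δ i)) q, koszul f z = 0 →
        ∃ u ∈ cochains (fun U => weightedHomogeneousSubmodule k w (γ - ∑ i ∈ U, δ i)) (q + 1),
          koszul f u = z) :
    (Module.finrank k ((weightedHomogeneousSubmodule k w γ).map
        (Ideal.Quotient.mkₐ k (Ideal.span (Set.range f))).toLinearMap) : ℤ) =
      ∑ U : Finset ι, (-1) ^ #U *
        (Module.finrank k (weightedHomogeneousSubmodule k w (γ - ∑ i ∈ U, δ i)) : ℤ) := by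
  set P := fun U : Finset ι => weightedHomogeneousSubmodule k w (γ - ∑ i ∈ U, δ i)
  have koszul_exact (q : ℕ) :
      cochains P (q + 1) ⊓ LinearMap.ker ((koszul f).restrictScalars k) =
        (cochains P (q + 2)).map ((koszul f).restrictScalars k) := by
    refine le_antisymm (fun z hz => hexact (q + 1) (by lia) z hz.1 hz.2) ?_
    rintro _ ⟨u, hu, rfl⟩
    exact ⟨koszul_mem_cochains_weightedHomogeneousSubmodule hf hu, koszul_koszul f u⟩
  have map_proj : (cochains P 0).map (LinearMap.proj ∅) = weightedHomogeneousSubmodule k w γ := by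
    refine le_antisymm ?_ fun p hp => ⟨Pi.single ∅ p, ⟨fun U => ?_, fun U hU => ?_⟩, by simp⟩
    · rintro _ ⟨z, hz, rfl⟩
      simpa [P] using hz.1 ∅
    · obtain rfl | hU := eq_or_ne U ∅
      · simpa [P] using hp
      · simp [hU]
    · simp [(card_ne_zero.mp hU).ne_empty]
  rw [sum_neg_one_pow_card_mul_finrank P koszul_exact, ← cochains_zero_inf_ker_mk hf,
    ← finrank_map_add_finrank_inf_ker ((Ideal.Quotient.mkₐ k
      (Ideal.span (Set.range f))).toLinearMap ∘ₗ LinearMap.proj ∅) (cochains P 0),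
    Submodule.map_comp, map_proj]
  push_cast
  ring

end

end EulerCharacteristic

section HilbertFunction

lemma linearCombination_wt {n m : ℕ} (g : Fin (n + 1) ⊕ Fin (m + 1) → ℤ) :
    Fintype.linearCombination ℤ (wt n m) g = (∑ i, g (Sum.inl i), ∑ j, g (Sum.inr j)) := by
  simp [Fintype.linearCombination_apply, Fintype.sum_sum_type, wt, Prod.ext_iff, Prod.fst_sum,
    Prod.snd_sum]

lemma weight_wt {n m : ℕ} (s : (Fin (n + 1) ⊕ Fin (m + 1)) →₀ ℕ) : Finsupp.weight (wt n m) s =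
    (((∑ i, s (Sum.inl i) : ℕ) : ℤ), ((∑ j, s (Sum.inr j) : ℕ) : ℤ)) := by
  simp [← linearCombination_intExponent, linearCombination_wt, intExponent_apply]

instance (n : ℕ) (a : ℤ) : Finite {e : Fin (n + 1) → ℕ // ((∑ i, e i : ℕ) : ℤ) = a} := by
  refine Set.Finite.to_subtype ((Set.finite_Iic fun _ => a.toNat).subset fun e he i => ?_)
  have := single_le_sum (f := e) (fun _ _ => Nat.zero_le _) (mem_univ i)
  have : ((∑ i, e i : ℕ) : ℤ) = a := he
  lia

lemma card_sum_eq (n : ℕ) (a : ℤ) :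
    (Nat.card {e : Fin (n + 1) → ℕ // ((∑ i, e i : ℕ) : ℤ) = a} : ℤ) = ibin (n + a) n := by
  obtain ha | ha := lt_or_ge a 0
  · have : IsEmpty {e : Fin (n + 1) → ℕ // ((∑ i, e i : ℕ) : ℤ) = a} := ⟨fun e => by lia⟩
    rw [Nat.card_of_isEmpty, ibin]
    split_ifs
    · rfl
    · rw [Nat.choose_eq_zero_of_lt (by lia)]
  · lift a to ℕ using ha
    simp only [Nat.cast_inj]
    rw [← Nat.card_congr (Sym.equivNatSumOfFintype (Fin (n + 1)) a), Nat.card_eq_fintype_card,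
      Sym.card_sym_eq_choose, Fintype.card_fin, ibin, if_neg (by lia), ← Nat.cast_add,
      Int.toNat_natCast, add_right_comm, Nat.add_sub_cancel, Nat.choose_symm_add]

/-- The exponents of the monomials of bidegree `γ`. -/
def weightFiberEquiv (n m : ℕ) (γ : ℤ × ℤ) :
    {s : (Fin (n + 1) ⊕ Fin (m + 1)) →₀ ℕ | Finsupp.weight (wt n m) s = γ} ≃
      {e : Fin (n + 1) → ℕ // ((∑ i, e i : ℕ) : ℤ) = γ.1} ×
        {e : Fin (m + 1) → ℕ // ((∑ j, e j : ℕ) : ℤ) = γ.2} :=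
  (Equiv.subtypeEquiv (Finsupp.equivFunOnFinite.trans (Equiv.sumArrowEquivProdArrow _ _ _))
    fun s => by simp [weight_wt, Prod.ext_iff]).trans Equiv.subtypeProdEquivProd

/-- The basis of `S_γ` given by the monomials of bidegree `γ`. -/
def gradBasis (k : Type) [Field k] (n m : ℕ) (γ : ℤ × ℤ) :
    Module.Basis {s : (Fin (n + 1) ⊕ Fin (m + 1)) →₀ ℕ | Finsupp.weight (wt n m) s = γ} k
      (grad k n m γ) :=
  .ofRepr <| (LinearEquiv.ofEq _ _ (weightedHomogeneousSubmodule_eq_finsupp_supported k _ γ)).trans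
    (AddMonoidAlgebra.supportedEquivFinsupp _)

instance {k : Type} [Field k] {n m : ℕ} (γ : ℤ × ℤ) :
    FiniteDimensional k (weightedHomogeneousSubmodule k (wt n m) γ) :=
  have := Finite.of_equiv _ (weightFiberEquiv n m γ).symm
  .of_basis (gradBasis k n m γ)

lemma HFS_eq_ibin_mul_ibin (k : Type) [Field k] (n m : ℕ) (γ : ℤ × ℤ) :
    (HFS k n m γ : ℤ) = ibin (n + γ.1) n * ibin (m + γ.2) m := by
  rw [HFS, Module.finrank_eq_nat_card_basis (gradBasis k n m γ),
    Nat.card_congr (weightFiberEquiv n m γ), Nat.card_prod, Nat.cast_mul, card_sum_eq, card_sum_eq]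

lemma chiCI_eq_sum_HFS (k : Type) [Field k] (n m d e : ℕ) (μ : ℤ × ℤ) : chiCI n m d e μ =
    ∑ U : Finset (Fin (n + m)), (-1) ^ #U * (HFS k n m (μ - #U • ((d : ℤ), (e : ℤ))) : ℤ) := by
  rw [← powerset_univ, sum_powerset_apply_card
    fun i => (-1) ^ i * (HFS k n m (μ - i • ((d : ℤ), (e : ℤ))) : ℤ), card_univ, Fintype.card_fin]
  refine sum_congr rfl fun i _ => ?_
  rw [HFS_eq_ibin_mul_ibin, nsmul_eq_mul]
  simp [add_sub_assoc, mul_left_comm, mul_assoc]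

end HilbertFunction

section CompleteIntersection

/-- The support of `H^{n+1}_{B₁}(S)`, which is spanned by the Laurent monomials in which exactly the
`x_i` have negative exponents. -/
def suppBone (n : ℕ) : Set (ℤ × ℤ) := {γ | γ.1 ≤ -(n + 1) ∧ 0 ≤ γ.2}

/-- The support of `H^{m+1}_{B₂}(S)`, which is spanned by the Laurent monomials in which exactly the
`y_j` have negative exponents. -/
def suppBtwo (m : ℕ) : Set (ℤ × ℤ) := {γ | 0 ≤ γ.1 ∧ γ.2 ≤ -(m + 1)}

lemma sum_le_neg_of_forall_neg {N : ℕ} {g : Fin (N + 1) → ℤ} (hg : ∀ i, g i < 0) :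
    ∑ i, g i ≤ -(N + 1) := by
  simpa using sum_le_card_nsmul univ g (-1) fun i _ => by have := hg i; lia

lemma linearCombination_wt_mem_suppBone {n m : ℕ} {g : Fin (n + 1) ⊕ Fin (m + 1) → ℤ}
    (hx : ∀ i, g (Sum.inl i) < 0) (hy : ∀ j, 0 ≤ g (Sum.inr j)) :
    Fintype.linearCombination ℤ (wt n m) g ∈ suppBone n :=
  linearCombination_wt g ▸ ⟨sum_le_neg_of_forall_neg hx, sum_nonneg (s := univ) fun j _ => hy j⟩

lemma linearCombination_wt_mem_suppBtwo {n m : ℕ} {g : Fin (n + 1) ⊕ Fin (m + 1) → ℤ}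
    (hx : ∀ i, 0 ≤ g (Sum.inl i)) (hy : ∀ j, g (Sum.inr j) < 0) :
    Fintype.linearCombination ℤ (wt n m) g ∈ suppBtwo m :=
  linearCombination_wt g ▸ ⟨sum_nonneg (s := univ) fun i _ => hx i, sum_le_neg_of_forall_neg hy⟩

variable {k : Type} [Field k] {n m r : ℕ} {f : Fin r → PolyS k n m} {δ : Fin r → ℤ × ℤ} {μ : ℤ × ℤ}

theorem exists_mem_cochains_grad_koszul_eq (hr : r ≤ n + m) (hf : ∀ i, f i ∈ grad k n m (δ i))
    (hdim : ringKrullDim (PolyS k n m ⧸ satIdeal (Ideal.span (Set.range f)) (Birr k n m)) ≤ 2)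
    (hX : ∀ U : Finset (Fin r), n + 2 ≤ #U → μ - ∑ i ∈ U, δ i ∉ suppBone n)
    (hY : ∀ U : Finset (Fin r), m + 2 ≤ #U → μ - ∑ i ∈ U, δ i ∉ suppBtwo m) {q : ℕ} (hq : 1 ≤ q)
    {z : Finset (Fin r) → PolyS k n m}
    (hz : z ∈ cochains (fun U => grad k n m (μ - ∑ i ∈ U, δ i)) q)
    (hfz : koszul f z = 0) :
    ∃ u ∈ cochains (fun U => grad k n m (μ - ∑ i ∈ U, δ i)) (q + 1), koszul f u = z := by
  let A : Finset (Fin (n + 1) ⊕ Fin (m + 1)) := univ.map Function.Embedding.inl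
  have mem_A (t) : t ∈ A ↔ t.isLeft := by cases t <;> simp [A]
  have hA : #A = n + 1 := by simp [A]
  have hσ : Fintype.card (Fin (n + 1) ⊕ Fin (m + 1)) = n + m + 2 := by simp; lia
  refine exists_mem_cochains_koszul_eq_of_koszul_eq_zero (A := A) (by simpa [hσ] using by lia)
    ⟨Sum.inl 0, by simp [A]⟩ ⟨Sum.inr 0, by simp [A]⟩ hf ?_ ?_ ?_ hq hz hfz
  · rintro i hi j hj q hq z hz hfz
    obtain ⟨i, rfl⟩ := Sum.isLeft_iff.mp ((mem_A i).mp hi)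
    obtain ⟨j, rfl⟩ := Sum.isRight_iff.mp (by simpa [mem_A] using hj)
    exact exists_koszul_eq_X_mul_X_pow_smul hf hdim hr i j hq hz hfz
  · intro U hU g hg hgA
    refine hX U (by lia) (hg ▸ linearCombination_wt_mem_suppBone (fun i => ?_) fun j => ?_)
    · simp [hgA, A]
    · simp [← not_lt, hgA, A]
  · intro U hU g hg hgA
    refine hY U (by lia) (hg ▸ linearCombination_wt_mem_suppBtwo (fun i => ?_) fun j => ?_)
    · simp [← not_lt, hgA, A]
    · simp [hgA, A]

theorem stmt9_general {k : Type} [Field k] {n m r : ℕ} (hr : r ≤ n + m) {f : Fin r → PolyS k n m}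
    {δ : Fin r → ℤ × ℤ} (hf : ∀ i, f i ∈ grad k n m (δ i))
    (hdim : ringKrullDim (PolyS k n m ⧸ satIdeal (Ideal.span (Set.range f)) (Birr k n m)) ≤ 2)
    {μ : ℤ × ℤ} (hX : ∀ U : Finset (Fin r), n + 2 ≤ #U → μ - ∑ i ∈ U, δ i ∉ suppBone n)
    (hY : ∀ U : Finset (Fin r), m + 2 ≤ #U → μ - ∑ i ∈ U, δ i ∉ suppBtwo m) :
    (HFq k n m (Ideal.span (Set.range f)) μ : ℤ) =
      ∑ U : Finset (Fin r), (-1) ^ #U * (HFS k n m (μ - ∑ i ∈ U, δ i) : ℤ) :=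
  finrank_map_mk_eq_sum hf fun _ hq _ => exists_mem_cochains_grad_koszul_eq hr hf hdim hX hY hq

lemma sub_card_nsmul_notMem_suppBone {d e : ℕ} {U : Finset (Fin (n + m))}
    (hμ : μ ∉ GammaSet n m d e (#U - n)) : μ - #U • ((d : ℤ), (e : ℤ)) ∉ suppBone n := by
  rintro ⟨h₁, h₂⟩
  have := card_finset_fin_le U
  simp only [Prod.fst_sub, Prod.snd_sub, Prod.smul_mk, nsmul_eq_mul] at h₁ h₂
  refine hμ (.inl ⟨by lia, by lia, ?_, ?_⟩) <;> rw [add_sub_cancel] <;> lia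

lemma sub_card_nsmul_notMem_suppBtwo {d e : ℕ} {U : Finset (Fin (n + m))}
    (hμ : μ ∉ GammaSet n m d e (#U - m)) : μ - #U • ((d : ℤ), (e : ℤ)) ∉ suppBtwo m := by
  rintro ⟨h₁, h₂⟩
  have := card_finset_fin_le U
  simp only [Prod.fst_sub, Prod.snd_sub, Prod.smul_mk, nsmul_eq_mul] at h₁ h₂
  refine hμ (.inr ⟨by lia, by lia, ?_, ?_⟩) <;> rw [add_sub_cancel] <;> lia

lemma CodimEq.ringKrullDim_le_two {I : Ideal (PolyS k n m)} (h : CodimEq k n m I (n + m)) :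
    ringKrullDim (PolyS k n m ⧸ satIdeal I (Birr k n m)) ≤ 2 := by
  rw [h, Nat.add_sub_cancel_left]
  rfl

end CompleteIntersection

theorem stmt9 (k : Type) [Field k] (n m d e : ℕ)
    (f : Fin (n + m) → PolyS k n m) (I : Ideal (PolyS k n m))
    (hCI : IsCIPoints k n m d e f I)
    (μ : ℤ × ℤ) (hμ : ∀ i : ℤ, 2 ≤ i → μ ∉ GammaSet n m d e i) :
    (HFq k n m I μ : ℤ) = chiCI n m d e μ := by
  obtain ⟨hf, rfl, hdim⟩ := hCI
  rw [chiCI_eq_sum_HFS k]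
  simp only [← sum_const]
  refine stmt9_general le_rfl hf hdim.ringKrullDim_le_two (fun U hU => ?_) fun U hU => ?_ <;>
    rw [sum_const]
  exacts [sub_card_nsmul_notMem_suppBone (hμ _ (by lia)),
    sub_card_nsmul_notMem_suppBtwo (hμ _ (by lia))]
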